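/- arXiv:1003.5368 — 3 statements merged into one kernel-verified Lean document; each statement's English description precedes it below -/
import Mathlib

section
/- The (d+1)² linear maps of W obtained by restricting A^m E*_r A^n to W, for 0 ≤ m, n ≤ d, form a basis of the ℂ-vector space End(W) of all ℂ-linear transformations from W to W; likewise the restrictions of (A*)^m E_t (A*)^n to W, for 0 ≤ m, n ≤ d, form a basis of End(W). -/
open Matrix
open scoped Classical

noncomputable section

/-- The full setup: a `Q`-polynomial distance-regular graph `Γ = (X,R)` of diameter `D ≥ 3`,
with adjacency matrix `A`, primitive idempotents `E_i`, eigenvalues `θ_i`,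
Krein parameters `q^h_{ij}`, a fixed base vertex `x`, dual primitive idempotents `E*_i`,
dual adjacency matrix `A*` and dual eigenvalues `θ*_i`. -/
structure TSetup (X : Type*) [Fintype X] [DecidableEq X] where
  G : SimpleGraph X
  hGconn : G.Connected
  D : ℕ
  hD3 : 3 ≤ D
  hDiamLe : ∀ y z : X, G.dist y z ≤ D
  hDiamEq : ∃ y z : X, G.dist y z = D
  p : ℕ → ℕ → ℕ → ℕ
  hDRG : ∀ h i j : ℕ, h ≤ D → i ≤ D → j ≤ D → ∀ y z : X, G.dist y z = h →
    Nat.card {w : X // G.dist y w = i ∧ G.dist z w = j} = p h i j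
  A : Matrix X X ℂ
  hA : ∀ y z : X, A y z = if G.Adj y z then 1 else 0
  E : ℕ → Matrix X X ℂ
  hEzero : ∀ i : ℕ, D < i → E i = 0
  hEsum : ∑ i ∈ Finset.range (D + 1), E i = 1
  hEidem : ∀ i j : ℕ, i ≤ D → j ≤ D → E i * E j = if i = j then E i else 0
  hEsymm : ∀ i : ℕ, (E i)ᵀ = E i
  hEreal : ∀ i : ℕ, (E i).map (starRingEnd ℂ) = E i
  hE0 : E 0 = (Fintype.card X : ℂ)⁻¹ • Matrix.of (fun _ _ => (1 : ℂ))
  θ : ℕ → ℝ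
  hθinj : ∀ i j : ℕ, i ≤ D → j ≤ D → θ i = θ j → i = j
  hAspec : A = ∑ i ∈ Finset.range (D + 1), (θ i : ℂ) • E i
  q : ℕ → ℕ → ℕ → ℝ
  hKrein : ∀ i j : ℕ, i ≤ D → j ≤ D →
    Matrix.hadamard (E i) (E j) =
      (Fintype.card X : ℂ)⁻¹ • ∑ h ∈ Finset.range (D + 1), (q h i j : ℂ) • E h
  hQpoly0 : ∀ h i j : ℕ, h ≤ D → i ≤ D → j ≤ D →
    (i + j < h ∨ h + j < i ∨ h + i < j) → q h i j = 0
  hQpoly1 : ∀ h i j : ℕ, h ≤ D → i ≤ D → j ≤ D →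
    (h = i + j ∨ i = h + j ∨ j = h + i) → q h i j ≠ 0
  x : X
  Estar : ℕ → Matrix X X ℂ
  hEstarzero : ∀ i : ℕ, D < i → Estar i = 0
  hEstar : ∀ i : ℕ, i ≤ D → ∀ y z : X,
    Estar i y z = if y = z ∧ G.dist x y = i then 1 else 0
  Astar : Matrix X X ℂ
  hAstar : ∀ y z : X, Astar y z = if y = z then (Fintype.card X : ℂ) * E 1 x y else 0
  θstar : ℕ → ℝ
  hθstarinj : ∀ i j : ℕ, i ≤ D → j ≤ D → θstar i = θstar j → i = j
  hAstarspec : Astar = ∑ i ∈ Finset.range (D + 1), (θstar i : ℂ) • Estar i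

variable {X : Type*} [Fintype X] [DecidableEq X]

/-- The Terwilliger algebra `T = T(x)`, generated by `A` and `A*`. -/
def TSetup.T (S : TSetup X) : Subalgebra ℂ (Matrix X X ℂ) :=
  Algebra.adjoin ℂ {S.A, S.Astar}

/-- A thin irreducible `T`-module `W` with endpoint `r`, dual endpoint `t` and diameter `d`,
where `E*_i W ≠ 0` iff `r ≤ i ≤ r + d` and `E_i W ≠ 0` iff `t ≤ i ≤ t + d`. -/
structure TMod (S : TSetup X) where
  W : Submodule ℂ (X → ℂ)
  hWinv : ∀ B ∈ S.T, ∀ w ∈ W, B *ᵥ w ∈ W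
  hWne : W ≠ ⊥
  hWirr : ∀ U : Submodule ℂ (X → ℂ), U ≤ W →
    (∀ B ∈ S.T, ∀ w ∈ U, B *ᵥ w ∈ U) → U = ⊥ ∨ U = W
  hthin : ∀ i : ℕ, Module.finrank ℂ (W.map (S.Estar i).mulVecLin) ≤ 1
  r : ℕ
  t : ℕ
  d : ℕ
  hr : ∀ i : ℕ, W.map (S.Estar i).mulVecLin ≠ ⊥ ↔ r ≤ i ∧ i ≤ r + d
  ht : ∀ i : ℕ, W.map (S.E i).mulVecLin ≠ ⊥ ↔ t ≤ i ∧ i ≤ t + d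

open Classical in
/-- The action of a matrix `B` on `W` (the restriction of `B` to `W`; defined to be `0`
if `B` does not leave `W` invariant). -/
def actW (S : TSetup X) (M : TMod S) (B : Matrix X X ℂ) : M.W →ₗ[ℂ] M.W :=
  if h : ∀ w ∈ M.W, B.mulVecLin w ∈ M.W then B.mulVecLin.restrict h else 0

/-- `tr_W(B)`: the trace of the action of `B` on `W`. -/
def trW (S : TSetup X) (M : TMod S) (B : Matrix X X ℂ) : ℂ :=
  LinearMap.trace ℂ M.W (actW S M B)

/-- `a_i(W) = tr_W(E*_{r+i} A)`. -/
def aW (S : TSetup X) (M : TMod S) (i : ℕ) : ℂ :=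
  trW S M (S.Estar (M.r + i) * S.A)

/-- `x_i(W) = tr_W(E*_{r+i} A E*_{r+i-1} A)`, with `x_0(W) = 0`. -/
def xW (S : TSetup X) (M : TMod S) (i : ℕ) : ℂ :=
  if i = 0 then 0 else trW S M (S.Estar (M.r + i) * S.A * S.Estar (M.r + i - 1) * S.A)

/-- `a*_i(W) = tr_W(E_{t+i} A*)`. -/
def astarW (S : TSetup X) (M : TMod S) (i : ℕ) : ℂ :=
  trW S M (S.E (M.t + i) * S.Astar)

/-- `x*_i(W) = tr_W(E_{t+i} A* E_{t+i-1} A*)`, with `x*_0(W) = 0`. -/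
def xstarW (S : TSetup X) (M : TMod S) (i : ℕ) : ℂ :=
  if i = 0 then 0 else trW S M (S.E (M.t + i) * S.Astar * S.E (M.t + i - 1) * S.Astar)

/-- The polynomials `p_i`: `p_0 = 1`, `p_{-1} = 0`,
`λ p_i = p_{i+1} + a_i(W) p_i + x_i(W) p_{i-1}`. -/
def pW (S : TSetup X) (M : TMod S) : ℕ → Polynomial ℂ
  | 0 => 1
  | 1 => Polynomial.X - Polynomial.C (aW S M 0)
  | (n + 2) =>
      (Polynomial.X - Polynomial.C (aW S M (n + 1))) * pW S M (n + 1)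
        - Polynomial.C (xW S M (n + 1)) * pW S M n

/-- The polynomials `p*_i`: `p*_0 = 1`, `p*_{-1} = 0`,
`λ p*_i = p*_{i+1} + a*_i(W) p*_i + x*_i(W) p*_{i-1}`. -/
def pstarW (S : TSetup X) (M : TMod S) : ℕ → Polynomial ℂ
  | 0 => 1
  | 1 => Polynomial.X - Polynomial.C (astarW S M 0)
  | (n + 2) =>
      (Polynomial.X - Polynomial.C (astarW S M (n + 1))) * pstarW S M (n + 1)
        - Polynomial.C (xstarW S M (n + 1)) * pstarW S M n

/-- The Hermitian inner product `⟨u,v⟩ = Σ_y u_y conj(v_y)` on `ℂ^X`. -/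
def herm (u v : X → ℂ) : ℂ := ∑ y, u y * (starRingEnd ℂ) (v y)

/-- `ν(W)`, the multiplicative inverse of `m_0(W) = tr_W(E_t E*_r)`. -/
def nuW (S : TSetup X) (M : TMod S) : ℂ :=
  (trW S M (S.E M.t * S.Estar M.r))⁻¹

/-- `k_i(W) = ν(W) m*_i(W)` where `m*_i(W) = tr_W(E*_{r+i} E_t)`. -/
def kW (S : TSetup X) (M : TMod S) (i : ℕ) : ℂ :=
  nuW S M * trW S M (S.Estar (M.r + i) * S.E M.t)

/-- `k*_i(W) = ν(W) m_i(W)` where `m_i(W) = tr_W(E_{t+i} E*_r)`. -/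
def kstarW (S : TSetup X) (M : TMod S) (i : ℕ) : ℂ :=
  nuW S M * trW S M (S.E (M.t + i) * S.Estar M.r)


/-- Dimension of an invariant subspace is the sum of the dimensions of its components. -/
theorem aux_finrank (D : ℕ) (P : ℕ → Matrix X X ℂ) (W : Submodule ℂ (X → ℂ))
    (hsum : ∑ i ∈ Finset.range (D + 1), P i = 1)
    (hidem : ∀ i j : ℕ, i ≤ D → j ≤ D → P i * P j = if i = j then P i else 0)
    (hPW : ∀ i, ∀ w ∈ W, P i *ᵥ w ∈ W) :
    Module.finrank ℂ W = ∑ i : Fin (D + 1), Module.finrank ℂ (W.map (P i).mulVecLin) := by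
  have hle : ∀ i, W.map (P i).mulVecLin ≤ W := by
    rintro i _ ⟨w, hw, rfl⟩
    exact hPW i w hw
  let f : W →ₗ[ℂ] (∀ i : Fin (D + 1), W.map (P i).mulVecLin) :=
    LinearMap.pi fun i => (P i).mulVecLin.restrict
      (p := W) (q := W.map (P i).mulVecLin) (fun w hw => ⟨w, hw, rfl⟩)
  have hf : ∀ (w : W) (i : Fin (D + 1)), ((f w i : W.map (P i).mulVecLin) : X → ℂ) = P i *ᵥ (w : X → ℂ) :=
    fun w i => rfl
  have hbij : Function.Bijective f := by
    constructor
    · rw [← LinearMap.ker_eq_bot, LinearMap.ker_eq_bot']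
      intro w hw
      apply Subtype.ext
      have h1 : ((1 : Matrix X X ℂ) *ᵥ (w : X → ℂ)) = 0 := by
        rw [← hsum, Matrix.sum_mulVec]
        apply Finset.sum_eq_zero
        intro i hi
        have := hf w ⟨i, Finset.mem_range.1 hi⟩
        rw [hw] at this
        exact this.symm
      simpa using h1
    · intro u
      refine ⟨⟨∑ i, (u i : X → ℂ), W.sum_mem fun i _ => hle i (u i).2⟩, ?_⟩
      funext i
      apply Subtype.ext
      rw [hf]
      simp only [Matrix.mulVec_sum]
      have : ∀ j : Fin (D + 1), P i *ᵥ (u j : X → ℂ) = if j = i then (u i : X → ℂ) else 0 := by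
        intro j
        obtain ⟨w, hw, h⟩ := (u j).2
        have h' : P j *ᵥ w = (u j : X → ℂ) := h
        rw [← h', Matrix.mulVec_mulVec, hidem i j (by omega) (by omega)]
        by_cases hij : j = i
        · subst hij
          simp [h']
        · have : (i : ℕ) ≠ j := fun h => hij (Fin.ext h.symm)
          simp [hij, this]
      simp [this]
  rw [(LinearEquiv.ofBijective f hbij).finrank_eq, Module.finrank_pi_fintype]

/-- A spectral projection is a polynomial in the operator. -/
theorem aux_poly (D : ℕ) (P : ℕ → Matrix X X ℂ) (B : Matrix X X ℂ) (θ : ℕ → ℝ)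
    (hsum : ∑ i ∈ Finset.range (D + 1), P i = 1)
    (hidem : ∀ i j : ℕ, i ≤ D → j ≤ D → P i * P j = if i = j then P i else 0)
    (hinj : ∀ i j : ℕ, i ≤ D → j ≤ D → θ i = θ j → i = j)
    (hB : B = ∑ i ∈ Finset.range (D + 1), (θ i : ℂ) • P i)
    (i : ℕ) (hi : i ≤ D) : P i ∈ Algebra.adjoin ℂ {B} := by
  have hBP : ∀ j ≤ D, B * P j = (θ j : ℂ) • P j := by
    intro j hj
    rw [hB, Finset.sum_mul, Finset.sum_eq_single j]
    · rw [Matrix.smul_mul, hidem j j hj hj, if_pos rfl]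
    · intro k hk hkj
      rw [Matrix.smul_mul, hidem k j (by simpa [Nat.lt_succ_iff] using hk) hj, if_neg hkj, smul_zero]
    · intro h
      exact absurd (Finset.mem_range.2 (by omega)) h
  have hpol : ∀ p : Polynomial ℂ, ∀ j ≤ D,
      Polynomial.aeval B p * P j = (p.eval (θ j : ℂ)) • P j := by
    intro p j hj
    induction p using Polynomial.induction_on' with
    | add p q hp hq => rw [map_add, add_mul, hp, hq, Polynomial.eval_add, add_smul]
    | monomial n a =>
      have : ∀ n : ℕ, B ^ n * P j = (θ j : ℂ) ^ n • P j := by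
        intro n
        induction n with
        | zero => simp
        | succ n ih =>
          rw [pow_succ, mul_assoc, hBP j hj, Matrix.mul_smul, ih, smul_smul, pow_succ, mul_comm]
      rw [Polynomial.aeval_monomial, Polynomial.eval_monomial, mul_assoc, this,
        ← Algebra.smul_def, smul_smul]
  have key : Polynomial.aeval B
      (Lagrange.basis (Finset.range (D + 1)) (fun j => (θ j : ℂ)) i) = P i := by
    have hinj' : Set.InjOn (fun j => (θ j : ℂ)) (Finset.range (D + 1)) := by
      intro a ha b hb hab
      simp only [Finset.coe_range, Set.mem_Iio] at ha hb
      exact hinj a b (by omega) (by omega) (Complex.ofReal_injective hab)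
    rw [← mul_one (Polynomial.aeval B _), ← hsum, Finset.mul_sum, Finset.sum_eq_single i]
    · rw [hpol _ i hi, Lagrange.eval_basis_self hinj' (Finset.mem_range.2 (by omega)), one_smul]
    · intro j hj hji
      have := Lagrange.eval_basis_of_ne (v := fun j => (θ j : ℂ)) (Ne.symm hji) hj
      rw [hpol _ j (by have := Finset.mem_range.1 hj; omega), this, zero_smul]
    · intro h
      exact absurd (Finset.mem_range.2 (by omega)) h
  rw [← key]
  exact Polynomial.aeval_mem_adjoin_singleton ℂ B

/-- The first part of the main lemma: a cyclic vector. -/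
theorem aux_cyc (D : ℕ) (A : Matrix X X ℂ) (P : ℕ → Matrix X X ℂ) (W : Submodule ℂ (X → ℂ))
    (r d : ℕ)
    (hzero : ∀ i, D < i → P i = 0)
    (hsum : ∑ i ∈ Finset.range (D + 1), P i = 1)
    (hidem : ∀ i j : ℕ, i ≤ D → j ≤ D → P i * P j = if i = j then P i else 0)
    (htri : ∀ i j : ℕ, i ≤ D → j ≤ D → (i + 1 < j ∨ j + 1 < i) → P i * A * P j = 0)
    (hAW : ∀ w ∈ W, A *ᵥ w ∈ W) (hPW : ∀ i, ∀ w ∈ W, P i *ᵥ w ∈ W)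
    (hirr : ∀ U : Submodule ℂ (X → ℂ), U ≤ W → (∀ w ∈ U, A *ᵥ w ∈ U) →
      (∀ i, ∀ w ∈ U, P i *ᵥ w ∈ U) → U = ⊥ ∨ U = W)
    (hthin : ∀ i, Module.finrank ℂ (W.map (P i).mulVecLin) ≤ 1)
    (hr : ∀ i : ℕ, W.map (P i).mulVecLin ≠ ⊥ ↔ r ≤ i ∧ i ≤ r + d)
    : ∃ v0 ∈ W, P r *ᵥ v0 = v0 ∧ (∀ w ∈ W, ∃ c : ℂ, P r *ᵥ w = c • v0) ∧
      (∀ n : ℕ, ∀ w ∈ W, (A ^ n) *ᵥ w ∈ W) ∧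
      ∀ c : Fin (d + 1) → ℂ, ∑ m, c m • ((A ^ (m : ℕ)) *ᵥ v0) = 0 → ∀ m, c m = 0 := by
  have hrD : ∀ i, r ≤ i → i ≤ r + d → i ≤ D := by
    intro i h1 h2
    by_contra h
    apply (hr i).2 ⟨h1, h2⟩
    rw [hzero i (by omega)]
    simp
  -- thin: every vector of P i W is a multiple of a given nonzero one
  have hmul : ∀ i, ∀ v ∈ W.map (P i).mulVecLin, v ≠ 0 → ∀ w ∈ W, ∃ c : ℂ, P i *ᵥ w = c • v := by
    intro i v hv hv0 w hw
    obtain ⟨c, hc⟩ := exists_smul_eq_of_finrank_eq_one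
      (K := ℂ) (V := W.map (P i).mulVecLin) (x := ⟨v, hv⟩)
      (le_antisymm (hthin i) (by
        rw [Nat.succ_le_iff, Module.finrank_pos_iff_exists_ne_zero]
        exact ⟨⟨v, hv⟩, by simpa using hv0⟩))
      (by simpa using hv0) ⟨P i *ᵥ w, w, hw, rfl⟩
    exact ⟨c, by simpa using (congrArg Subtype.val hc).symm⟩
  obtain ⟨v0, hv0m, hv0⟩ := (Submodule.ne_bot_iff _).1 ((hr r).2 ⟨le_rfl, by omega⟩)
  have hPv0 : P r *ᵥ v0 = v0 := by
    obtain ⟨w, hw, h⟩ := hv0m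
    have h' : P r *ᵥ w = v0 := h
    have := hrD r le_rfl (by omega)
    rw [← h', Matrix.mulVec_mulVec, hidem r r this this, if_pos rfl]
  have hv0W : v0 ∈ W := by
    rw [← hPv0]
    obtain ⟨w, hw, h⟩ := hv0m
    have h' : P r *ᵥ w = v0 := h
    exact hPW r _ (h' ▸ hPW r w hw)
  have hpowW : ∀ n : ℕ, ∀ w ∈ W, (A ^ n) *ᵥ w ∈ W := by
    intro n
    induction n with
    | zero => intro w hw; simpa using hw
    | succ n ih =>
      intro w hw
      rw [pow_succ, ← Matrix.mulVec_mulVec]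
      exact ih _ (hAW w hw)
  -- expansion
  have hexp : ∀ i (w : X → ℂ), P i *ᵥ (A *ᵥ w) =
      ∑ j ∈ Finset.range (D + 1), (P i * A * P j) *ᵥ w := by
    intro i w
    rw [← Matrix.sum_mulVec, ← Finset.mul_sum, hsum, mul_one, Matrix.mulVec_mulVec]
  have hPA0 : ∀ k (w : X → ℂ), (∀ i, k < i → P i *ᵥ w = 0) →
      ∀ i, k < i → P i *ᵥ (A *ᵥ w) = if i = k + 1 then (P i * A * P k) *ᵥ w else 0 := by
    intro k w hw i hi
    by_cases hiD : i ≤ D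
    swap
    · rw [hzero i (by omega)]; simp
    rw [hexp, Finset.sum_eq_single k]
    · split_ifs with h
      · rfl
      · rw [htri i k hiD (by omega) (by omega), Matrix.zero_mulVec]
    · intro j hj hjk
      have hj' := Finset.mem_range.1 hj
      rcases lt_or_gt_of_ne hjk with h | h
      · rw [htri i j hiD (by omega) (by omega), Matrix.zero_mulVec]
      · rw [← Matrix.mulVec_mulVec, hw j h, Matrix.mulVec_zero]
    · intro h
      exact absurd (Finset.mem_range.2 (by omega)) h
  have hupper : ∀ n i : ℕ, r + n < i → P i *ᵥ ((A ^ n) *ᵥ v0) = 0 := by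
    intro n
    induction n with
    | zero =>
      intro i hi
      by_cases hiD : i ≤ D
      swap
      · rw [hzero i (by omega)]; simp
      rw [pow_zero, Matrix.one_mulVec, ← hPv0, Matrix.mulVec_mulVec,
        hidem i r hiD (by omega), if_neg (by omega), Matrix.zero_mulVec]
    | succ n ih =>
      intro i hi
      rw [pow_succ', ← Matrix.mulVec_mulVec, hPA0 (r + n) _ ih i (by omega), if_neg (by omega)]
  have hdiag : ∀ k : ℕ, k ≤ d → P (r + k) *ᵥ ((A ^ k) *ᵥ v0) ≠ 0 := by
    intro k
    induction k with
    | zero =>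
      intro _
      simpa [hPv0] using hv0
    | succ k ih =>
      intro hk h0
      have ih := ih (by omega)
      rw [pow_succ', ← Matrix.mulVec_mulVec, hPA0 (r + k) _ (hupper k) _ (by omega),
        if_pos (by omega), ← Matrix.mulVec_mulVec] at h0
      have hAk : ∀ w ∈ W, (P (r + (k + 1)) * A * P (r + k)) *ᵥ w = 0 := by
        intro w hw
        obtain ⟨c, hc⟩ := hmul (r + k) _ ⟨_, hpowW k v0 hv0W, rfl⟩ ih w hw
        rw [← Matrix.mulVec_mulVec, hc, Matrix.mulVec_smul, Matrix.mulVecLin_apply, h0, smul_zero]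
      let U : Submodule ℂ (X → ℂ) :=
        { carrier := {w | w ∈ W ∧ ∀ i, r + k < i → P i *ᵥ w = 0}
          add_mem' := by
            rintro a b ⟨ha, ha'⟩ ⟨hb, hb'⟩
            exact ⟨W.add_mem ha hb, fun i hi => by
              rw [Matrix.mulVec_add, ha' i hi, hb' i hi, add_zero]⟩
          zero_mem' := ⟨W.zero_mem, fun i _ => Matrix.mulVec_zero _⟩
          smul_mem' := by
            rintro c a ⟨ha, ha'⟩
            exact ⟨W.smul_mem c ha, fun i hi => by
              rw [Matrix.mulVec_smul, ha' i hi, smul_zero]⟩ }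
      rcases hirr U (fun w hw => hw.1) (fun w hw => ⟨hAW w hw.1, fun i hi => by
          rw [hPA0 (r + k) w hw.2 i hi]
          split_ifs with h
          · subst h
            exact hAk w hw.1
          · rfl⟩)
        (fun j w hw => ⟨hPW j w hw.1, fun i hi => by
          by_cases hiD : i ≤ D
          swap
          · rw [hzero i (by omega)]; simp
          by_cases hjD : j ≤ D
          swap
          · rw [hzero j (by omega)]; simp
          rw [Matrix.mulVec_mulVec, hidem i j hiD hjD]
          split_ifs with h
          · exact hw.2 i hi
          · simp⟩) with h | h
      · have : v0 ∈ U := ⟨hv0W, fun i hi => by simpa using hupper 0 i (by omega)⟩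
        rw [h] at this
        exact hv0 (by simpa using this)
      · apply (hr (r + (k + 1))).2 ⟨by omega, by omega⟩
        rw [Submodule.eq_bot_iff]
        rintro _ ⟨w, hw, rfl⟩
        have hw' : w ∈ W := hw
        rw [← h] at hw'
        exact hw'.2 _ (by omega)
  have hind : ∀ c : Fin (d + 1) → ℂ, ∑ m, c m • ((A ^ (m : ℕ)) *ᵥ v0) = 0 → ∀ m, c m = 0 := by
    intro c hc
    have main : ∀ n : ℕ, ∀ m : Fin (d + 1), d - m = n → c m = 0 := by
      intro n
      induction n using Nat.strong_induction_on with
      | _ n ih =>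
        intro m hm
        have h1 := congrArg (fun v => P (r + m) *ᵥ v) hc
        simp only [Matrix.mulVec_sum, Matrix.mulVec_zero, Matrix.mulVec_smul] at h1
        rw [Finset.sum_eq_single m] at h1
        · exact (smul_eq_zero.1 h1).resolve_right (hdiag m (by omega))
        · intro j _ hjm
          rcases lt_or_gt_of_ne hjm with h | h
          · rw [hupper j _ (by simpa using h), smul_zero]
          · have : (m : ℕ) < j := h
            rw [ih (d - j) (by omega) j rfl, zero_smul]
        · simp
    exact fun m => main _ m rfl
  exact ⟨v0, hv0W, hPv0, hmul r v0 hv0m hv0, hpowW, hind⟩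

theorem aux_span {K V : Type*} [Field K] [AddCommGroup V] [Module K V] (d : ℕ)
    (hdim : Module.finrank K V = d + 1)
    (F : Fin (d + 1) × Fin (d + 1) → (V →ₗ[K] V)) (hli : LinearIndependent K F) :
    Submodule.span K (Set.range F) = ⊤ := by
  have : FiniteDimensional K V := .of_finrank_pos (by omega)
  have hc : Fintype.card (Fin (d + 1) × Fin (d + 1)) = Module.finrank K (V →ₗ[K] V) := by
    rw [Module.finrank_linearMap, hdim]
    simp
  exact LinearIndependent.span_eq_top_of_card_eq_finrank' hli hc

open scoped ComplexOrder in
/-- The main abstract lemma. -/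
theorem aux_key (D : ℕ) (A : Matrix X X ℂ) (P : ℕ → Matrix X X ℂ) (W : Submodule ℂ (X → ℂ))
    (r d : ℕ)
    (hA : Aᴴ = A) (hP : ∀ i, (P i)ᴴ = P i)
    (hzero : ∀ i, D < i → P i = 0)
    (hsum : ∑ i ∈ Finset.range (D + 1), P i = 1)
    (hidem : ∀ i j : ℕ, i ≤ D → j ≤ D → P i * P j = if i = j then P i else 0)
    (htri : ∀ i j : ℕ, i ≤ D → j ≤ D → (i + 1 < j ∨ j + 1 < i) → P i * A * P j = 0)
    (hAW : ∀ w ∈ W, A *ᵥ w ∈ W) (hPW : ∀ i, ∀ w ∈ W, P i *ᵥ w ∈ W)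
    (hirr : ∀ U : Submodule ℂ (X → ℂ), U ≤ W → (∀ w ∈ U, A *ᵥ w ∈ U) →
      (∀ i, ∀ w ∈ U, P i *ᵥ w ∈ U) → U = ⊥ ∨ U = W)
    (hthin : ∀ i, Module.finrank ℂ (W.map (P i).mulVecLin) ≤ 1)
    (hr : ∀ i : ℕ, W.map (P i).mulVecLin ≠ ⊥ ↔ r ≤ i ∧ i ≤ r + d)
    (hdim : Module.finrank ℂ W = d + 1)
    (F : Fin (d + 1) × Fin (d + 1) → (W →ₗ[ℂ] W))
    (hF : ∀ mn w, (F mn w : X → ℂ) = (A ^ (mn.1 : ℕ) * P r * A ^ (mn.2 : ℕ)) *ᵥ (w : X → ℂ)) :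
    LinearIndependent ℂ F ∧ Submodule.span ℂ (Set.range F) = ⊤ := by
  obtain ⟨v0, hv0W, hPv0, hmul, hpowW, hind⟩ := aux_cyc D A P W r d hzero hsum hidem htri
    hAW hPW hirr hthin hr
  have hli : LinearIndependent ℂ F := by
    refine (Fintype.linearIndependent_iff (R := ℂ) (M := W →ₗ[ℂ] W) (v := F)).2 ?_
    intro c hc
    let B : Fin (d + 1) → Matrix X X ℂ := fun m => ∑ n : Fin (d + 1), c (m, n) • A ^ (n : ℕ)
    have hB : ∀ m, ∀ w ∈ W, B m *ᵥ w ∈ W := by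
      intro m w hw
      simp only [B, Matrix.sum_mulVec, Matrix.smul_mulVec]
      exact W.sum_mem fun n _ => W.smul_mem _ (hpowW _ w hw)
    have h1 : ∀ m, ∀ w ∈ W, P r *ᵥ (B m *ᵥ w) = 0 := by
      intro m w hw
      have h2 : ∑ m : Fin (d + 1), (A ^ (m : ℕ)) *ᵥ (P r *ᵥ (B m *ᵥ w)) = 0 := by
        have h3 := congrArg (fun f : W →ₗ[ℂ] W => ((f ⟨w, hw⟩ : W) : X → ℂ)) hc
        simp only [LinearMap.sum_apply, LinearMap.smul_apply, LinearMap.zero_apply,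
          Submodule.coe_sum, Submodule.coe_smul, hF, Submodule.coe_zero,
          Fintype.sum_prod_type] at h3
        rw [← h3]
        apply Finset.sum_congr rfl
        intro m _
        simp only [B, Matrix.mulVec_sum, Matrix.sum_mulVec, Matrix.smul_mulVec,
          Matrix.mulVec_smul, Matrix.mulVec_mulVec, mul_assoc]
      choose g hg using fun m => hmul (B m *ᵥ w) (hB m w hw)
      simp only [hg, Matrix.mulVec_smul] at h2
      rw [hg, hind g h2 m, zero_smul]
    rintro ⟨m, n⟩
    have hBH : (B m)ᴴ *ᵥ v0 = ∑ n : Fin (d + 1), star (c (m, n)) • ((A ^ (n : ℕ)) *ᵥ v0) := by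
      simp only [B, Matrix.conjTranspose_sum, Matrix.conjTranspose_smul,
        Matrix.conjTranspose_pow, hA, Matrix.sum_mulVec, Matrix.smul_mulVec]
    have hmem : (B m)ᴴ *ᵥ v0 ∈ W := by
      rw [hBH]
      exact W.sum_mem fun n _ => W.smul_mem _ (hpowW _ _ hv0W)
    have h4 : star ((B m)ᴴ *ᵥ v0) ⬝ᵥ ((B m)ᴴ *ᵥ v0) = 0 := by
      rw [Matrix.star_mulVec, Matrix.conjTranspose_conjTranspose, ← Matrix.dotProduct_mulVec]
      nth_rewrite 1 [← hPv0]
      rw [Matrix.star_mulVec, hP, ← Matrix.dotProduct_mulVec, h1 m _ hmem, dotProduct_zero]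
    have h5 := dotProduct_star_self_eq_zero.1 h4
    rw [hBH] at h5
    exact star_eq_zero.1 (hind _ h5 n)
  exact ⟨hli, aux_span d hdim F hli⟩

section
variable (S : TSetup X)

theorem aux_AH : S.Aᴴ = S.A := by
  ext y z
  simp [Matrix.conjTranspose_apply, S.hA, S.G.adj_comm, apply_ite]

theorem aux_EH (i : ℕ) : (S.E i)ᴴ = S.E i := by
  have h := S.hEreal i
  have h2 : (S.E i)ᴴ = (S.E i)ᵀ.map (starRingEnd ℂ) := rfl
  rw [h2, S.hEsymm, h]

theorem aux_EstarH (i : ℕ) : (S.Estar i)ᴴ = S.Estar i := by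
  by_cases hi : i ≤ S.D
  · ext y z
    rw [Matrix.conjTranspose_apply, S.hEstar i hi, S.hEstar i hi]
    by_cases h : y = z
    · subst h
      split_ifs <;> simp
    · simp [h, Ne.symm h]
  · rw [S.hEstarzero i (by omega)]; simp

theorem aux_AstarH : S.Astarᴴ = S.Astar := by
  conv_lhs => rw [S.hAstarspec]
  conv_rhs => rw [S.hAstarspec]
  simp [Matrix.conjTranspose_sum, Matrix.conjTranspose_smul, aux_EstarH]

theorem aux_Estar_diag (i : ℕ) (hi : i ≤ S.D) :
    S.Estar i = Matrix.diagonal (fun y => if S.G.dist S.x y = i then (1 : ℂ) else 0) := by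
  ext y z
  rw [S.hEstar i hi, Matrix.diagonal_apply]
  by_cases h : y = z <;> simp [h]

theorem aux_Estar_sum : ∑ i ∈ Finset.range (S.D + 1), S.Estar i = 1 := by
  ext y z
  rw [Matrix.sum_apply, Finset.sum_congr rfl
    (fun i hi => S.hEstar i (by have := Finset.mem_range.1 hi; omega) y z), Matrix.one_apply]
  have := S.hDiamLe S.x y
  by_cases h : y = z
  · subst h
    simp
    omega
  · simp [h]

theorem aux_Estar_idem (i j : ℕ) (hi : i ≤ S.D) (hj : j ≤ S.D) :
    S.Estar i * S.Estar j = if i = j then S.Estar i else 0 := by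
  rw [aux_Estar_diag S i hi, aux_Estar_diag S j hj, Matrix.diagonal_mul_diagonal]
  split_ifs with h
  · subst h
    congr 1
    funext y
    split_ifs <;> simp
  · rw [← Matrix.diagonal_zero]
    congr 1
    funext y
    split_ifs <;> simp_all

theorem aux_tri (i j : ℕ) (hi : i ≤ S.D) (hj : j ≤ S.D) (h : i + 1 < j ∨ j + 1 < i) :
    S.Estar i * S.A * S.Estar j = 0 := by
  rw [aux_Estar_diag S i hi, aux_Estar_diag S j hj]
  ext y z
  rw [Matrix.mul_diagonal, Matrix.diagonal_mul, S.hA, Matrix.zero_apply]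
  split_ifs with h1 h2 h3 <;> simp
  have e := SimpleGraph.dist_eq_one_iff_adj.2 h2
  have t1 := S.hGconn.dist_triangle (u := S.x) (v := y) (w := z)
  have t2 := S.hGconn.dist_triangle (u := S.x) (v := z) (w := y)
  rw [SimpleGraph.dist_comm (u := z)] at t2
  omega

theorem aux_Astar_diag :
    S.Astar = Matrix.diagonal (fun y => (Fintype.card X : ℂ) * S.E 1 S.x y) := by
  ext y z
  rw [S.hAstar, Matrix.diagonal_apply]

open scoped ComplexOrder in
theorem aux_tri_star (i j : ℕ) (hi : i ≤ S.D) (hj : j ≤ S.D) (h : i + 1 < j ∨ j + 1 < i) :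
    S.E i * S.Astar * S.E j = 0 := by
  have hD := S.hD3
  have hsym : ∀ k y z, S.E k y z = S.E k z y := fun k y z => by
    conv_lhs => rw [← S.hEsymm k]
    rfl
  have hmid : S.E 1 * (S.E i ⊙ S.E j) * S.E 1 = 0 := by
    rw [S.hKrein i j hi hj, Matrix.mul_smul, Matrix.smul_mul, Finset.mul_sum, Finset.sum_mul,
      Finset.sum_eq_zero, smul_zero]
    intro k hk
    have hk' := Finset.mem_range.1 hk
    rw [Matrix.mul_smul, Matrix.smul_mul, S.hEidem 1 k (by omega) (by omega)]
    split_ifs with h1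
    · subst h1
      rw [S.hQpoly0 1 i j (by omega) hi hj (by omega)]
      simp
    · simp
  have htr : ((S.E i * S.Astar * S.E j)ᴴ * (S.E i * S.Astar * S.E j)).trace = 0 := by
    have e1 : ((S.E i * S.Astar * S.E j)ᴴ * (S.E i * S.Astar * S.E j)).trace
        = ((S.Astar * S.E i) * (S.Astar * S.E j)).trace := by
      rw [Matrix.conjTranspose_mul, Matrix.conjTranspose_mul, aux_EH, aux_EH, aux_AstarH]
      have a1 : S.E j * (S.Astar * S.E i) * (S.E i * S.Astar * S.E j)
          = S.E j * (S.Astar * (S.E i * S.E i) * S.Astar * S.E j) := by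
        simp only [mul_assoc]
      rw [a1, Matrix.trace_mul_comm, S.hEidem i i hi hi, if_pos rfl]
      have a2 : S.Astar * S.E i * S.Astar * S.E j * S.E j
          = S.Astar * S.E i * (S.Astar * (S.E j * S.E j)) := by
        simp only [mul_assoc]
      rw [a2, S.hEidem j j hj hj, if_pos rfl]
    rw [e1, aux_Astar_diag]
    have e2 := congrFun (congrFun hmid S.x) S.x
    simp only [Matrix.mul_apply, Matrix.hadamard_apply, Matrix.zero_apply] at e2
    simp only [Matrix.trace, Matrix.diag_apply, Matrix.mul_apply (M := Matrix.diagonal _ * _),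
      Matrix.diagonal_mul]
    have e3 : ∀ y z, (Fintype.card X : ℂ) * S.E 1 S.x y * S.E i y z *
        ((Fintype.card X : ℂ) * S.E 1 S.x z * S.E j z y) =
        (Fintype.card X : ℂ) ^ 2 * (S.E 1 S.x y * (S.E i y z * S.E j y z) * S.E 1 z S.x) := by
      intro y z
      rw [hsym j z y, hsym 1 z S.x]
      ring
    simp only [e3, ← Finset.mul_sum]
    rw [Finset.sum_comm]
    simp only [← Finset.sum_mul]
    rw [e2, mul_zero]
  exact Matrix.trace_conjTranspose_mul_self_eq_zero_iff.1 htr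

theorem aux_A_mem : S.A ∈ S.T := Algebra.subset_adjoin (by simp)

theorem aux_Astar_mem : S.Astar ∈ S.T := Algebra.subset_adjoin (by simp)

theorem aux_E_mem (i : ℕ) : S.E i ∈ S.T := by
  by_cases hi : i ≤ S.D
  · exact Algebra.adjoin_mono (by simp)
      (aux_poly S.D S.E S.A S.θ S.hEsum S.hEidem S.hθinj S.hAspec i hi)
  · rw [S.hEzero i (by omega)]
    exact S.T.zero_mem

theorem aux_Estar_mem (i : ℕ) : S.Estar i ∈ S.T := by
  by_cases hi : i ≤ S.D
  · exact Algebra.adjoin_mono (by simp)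
      (aux_poly S.D S.Estar S.Astar S.θstar (aux_Estar_sum S) (aux_Estar_idem S)
        S.hθstarinj S.hAstarspec i hi)
  · rw [S.hEstarzero i (by omega)]
    exact S.T.zero_mem

theorem aux_inv (U : Submodule ℂ (X → ℂ)) (h1 : ∀ w ∈ U, S.A *ᵥ w ∈ U)
    (h2 : ∀ w ∈ U, S.Astar *ᵥ w ∈ U) : ∀ B ∈ S.T, ∀ w ∈ U, B *ᵥ w ∈ U := by
  intro B hB
  induction hB using Algebra.adjoin_induction with
  | mem B hB =>
    rcases hB with rfl | hB
    · exact h1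
    · rw [Set.mem_singleton_iff.1 hB]
      exact h2
  | algebraMap c =>
    intro w hw
    rw [Algebra.algebraMap_eq_smul_one, Matrix.smul_mulVec, Matrix.one_mulVec]
    exact U.smul_mem c hw
  | add B C _ _ hB hC =>
    intro w hw
    rw [Matrix.add_mulVec]
    exact U.add_mem (hB w hw) (hC w hw)
  | mul B C _ _ hB hC =>
    intro w hw
    rw [← Matrix.mulVec_mulVec]
    exact hB _ (hC w hw)

theorem aux_comb (U : Submodule ℂ (X → ℂ)) (D : ℕ) (P : ℕ → Matrix X X ℂ) (θ : ℕ → ℝ)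
    (h : ∀ i, ∀ w ∈ U, P i *ᵥ w ∈ U) :
    ∀ w ∈ U, (∑ i ∈ Finset.range (D + 1), (θ i : ℂ) • P i) *ᵥ w ∈ U := by
  intro w hw
  rw [Matrix.sum_mulVec]
  refine U.sum_mem fun i _ => ?_
  rw [Matrix.smul_mulVec]
  exact U.smul_mem _ (h i w hw)

theorem aux_actW (M : TMod S) (B : Matrix X X ℂ) (hB : B ∈ S.T) (w : M.W) :
    (actW S M B w : X → ℂ) = B *ᵥ (w : X → ℂ) := by
  have h : ∀ w ∈ M.W, B.mulVecLin w ∈ M.W := fun w hw => M.hWinv B hB w hw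
  rw [actW, dif_pos h]
  rfl

/-- counting: number of indices with nonzero component. -/
theorem aux_count (D r d : ℕ) (h : r + d ≤ D) :
    ∑ i : Fin (D + 1), (if r ≤ (i : ℕ) ∧ (i : ℕ) ≤ r + d then 1 else 0) = d + 1 := by
  rw [Fin.sum_univ_eq_sum_range (fun i => if r ≤ i ∧ i ≤ r + d then 1 else 0),
    ← Finset.card_filter]
  have : (Finset.range (D + 1)).filter (fun i => r ≤ i ∧ i ≤ r + d) = Finset.Icc r (r + d) := by
    ext i
    simp only [Finset.mem_filter, Finset.mem_range, Finset.mem_Icc]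
    omega
  rw [this, Nat.card_Icc]
  omega

theorem aux_dim (M : TMod S) : Module.finrank ℂ M.W = M.d + 1 := by
  rw [aux_finrank S.D S.Estar M.W (aux_Estar_sum S) (aux_Estar_idem S)
    (fun i => M.hWinv _ (aux_Estar_mem S i)), ← aux_count S.D M.r M.d]
  · apply Finset.sum_congr rfl
    intro i _
    split_ifs with h
    · refine le_antisymm (M.hthin i) ?_
      rw [Submodule.one_le_finrank_iff]
      exact (M.hr i).2 h
    · have : M.W.map (S.Estar i).mulVecLin = ⊥ := by
        by_contra h'
        exact h ((M.hr i).1 h')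
      rw [this, finrank_bot]
  · by_contra h
    apply (M.hr (M.r + M.d)).2 ⟨by omega, le_rfl⟩
    rw [S.hEstarzero _ (by omega)]
    simp

theorem aux_dual_thin (M : TMod S) (i : ℕ) :
    Module.finrank ℂ (M.W.map (S.E i).mulVecLin) ≤ 1 := by
  by_cases hi : i ≤ S.D
  swap
  · have h0 : M.W.map (S.E i).mulVecLin = ⊥ := by
      rw [S.hEzero i (by omega)]
      simp
    rw [h0, finrank_bot]
    exact Nat.zero_le _
  have htD : M.t + M.d ≤ S.D := by
    by_contra h
    apply (M.ht (M.t + M.d)).2 ⟨by omega, le_rfl⟩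
    rw [S.hEzero _ (by omega)]
    simp
  have h1 := aux_finrank S.D S.E M.W S.hEsum S.hEidem (fun i => M.hWinv _ (aux_E_mem S i))
  rw [aux_dim, ← aux_count S.D M.t M.d htD] at h1
  have h2 := (Finset.sum_eq_sum_iff_of_le (fun i _ => by
    split_ifs with h
    · rw [Nat.succ_le_iff, Nat.pos_iff_ne_zero, Ne, Submodule.finrank_eq_zero]
      exact (M.ht _).2 h
    · exact Nat.zero_le _)).1 h1 ⟨i, by omega⟩ (Finset.mem_univ _)
  simp only at h2
  rw [← h2]
  split_ifs <;> simp

end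

/-- The restrictions of `A^m E*_r A^n` (`0 ≤ m,n ≤ d`) to `W` form a basis of `End(W)`;
likewise the restrictions of `(A*)^m E_t (A*)^n`. -/
theorem stmt1 (S : TSetup X) (M : TMod S) (hd : 0 < M.d) :
    (LinearIndependent ℂ (fun mn : Fin (M.d + 1) × Fin (M.d + 1) =>
        actW S M (S.A ^ (mn.1 : ℕ) * S.Estar M.r * S.A ^ (mn.2 : ℕ))) ∧
      Submodule.span ℂ (Set.range (fun mn : Fin (M.d + 1) × Fin (M.d + 1) =>
        actW S M (S.A ^ (mn.1 : ℕ) * S.Estar M.r * S.A ^ (mn.2 : ℕ)))) = ⊤) ∧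
    (LinearIndependent ℂ (fun mn : Fin (M.d + 1) × Fin (M.d + 1) =>
        actW S M (S.Astar ^ (mn.1 : ℕ) * S.E M.t * S.Astar ^ (mn.2 : ℕ))) ∧
      Submodule.span ℂ (Set.range (fun mn : Fin (M.d + 1) × Fin (M.d + 1) =>
        actW S M (S.Astar ^ (mn.1 : ℕ) * S.E M.t * S.Astar ^ (mn.2 : ℕ)))) = ⊤) := by
  constructor
  · exact aux_key S.D S.A S.Estar M.W M.r M.d (aux_AH S) (aux_EstarH S) S.hEstarzero
      (aux_Estar_sum S) (aux_Estar_idem S) (aux_tri S)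
      (M.hWinv _ (aux_A_mem S)) (fun i => M.hWinv _ (aux_Estar_mem S i))
      (fun U hU h1 h2 => M.hWirr U hU (aux_inv S U h1
        (by rw [S.hAstarspec]; exact aux_comb U S.D S.Estar S.θstar h2)))
      M.hthin M.hr (aux_dim S M) _
      (fun mn w => aux_actW S M _ (S.T.mul_mem (S.T.mul_mem (S.T.pow_mem (aux_A_mem S) _)
        (aux_Estar_mem S _)) (S.T.pow_mem (aux_A_mem S) _)) w)
  · exact aux_key S.D S.Astar S.E M.W M.t M.d (aux_AstarH S) (aux_EH S) S.hEzero
      S.hEsum S.hEidem (aux_tri_star S)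
      (M.hWinv _ (aux_Astar_mem S)) (fun i => M.hWinv _ (aux_E_mem S i))
      (fun U hU h1 h2 => M.hWirr U hU (aux_inv S U
        (by rw [S.hAspec]; exact aux_comb U S.D S.E S.θ h2) h1))
      (aux_dual_thin S M) M.ht (aux_dim S M) _
      (fun mn w => aux_actW S M _ (S.T.mul_mem (S.T.mul_mem (S.T.pow_mem (aux_Astar_mem S) _)
        (aux_E_mem S _)) (S.T.pow_mem (aux_Astar_mem S) _)) w)
end
end

section
/- Let v be a nonzero vector in E*_rW. Then for 0 ≤ i ≤ d the vector E*_{r+i}A^i v is nonzero (hence spans the one-dimensional space E*_{r+i}W), and {E*_{r+i}A^i v}_{i=0}^d is a basis for W. Dually, for a nonzero u ∈ E_tW, each E_{t+i}(A*)^i u is nonzero and {E_{t+i}(A*)^i u}_{i=0}^d is a basis for W. -/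
open Matrix
open scoped Classical

noncomputable section

variable {X : Type*} [Fintype X] [DecidableEq X]

/-- Common abstract setting for the two halves of the theorem. -/
structure HalfTD (A B : Matrix X X ℂ) (F : ℕ → Matrix X X ℂ) (th : ℕ → ℂ) (D : ℕ)
    (W : Submodule ℂ (X → ℂ)) (r d : ℕ) : Prop where
  zero : ∀ i, D < i → F i = 0
  sum : ∑ i ∈ Finset.range (D + 1), F i = 1
  idem : ∀ i j, F i * F j = if i = j then F i else 0
  inj : ∀ i j, i ≤ D → j ≤ D → th i = th j → i = j
  spec : B = ∑ i ∈ Finset.range (D + 1), th i • F i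
  tri : ∀ i j, (i + 1 < j ∨ j + 1 < i) → F i * A * F j = 0
  WA : ∀ w ∈ W, A *ᵥ w ∈ W
  WB : ∀ w ∈ W, B *ᵥ w ∈ W
  irr : ∀ U : Submodule ℂ (X → ℂ), U ≤ W → (∀ w ∈ U, A *ᵥ w ∈ U) → (∀ w ∈ U, B *ᵥ w ∈ U) →
    U = ⊥ ∨ U = W
  thin : ∀ i, Module.finrank ℂ (W.map (F i).mulVecLin) ≤ 1
  supp : ∀ i, W.map (F i).mulVecLin ≠ ⊥ ↔ r ≤ i ∧ i ≤ r + d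

/-- A matrix with a spectral decomposition acts on each component as a scalar. -/
lemma spec_mul (B : Matrix X X ℂ) (F : ℕ → Matrix X X ℂ) (th : ℕ → ℂ) (D : ℕ)
    (zero : ∀ i, D < i → F i = 0)
    (idem : ∀ i j, F i * F j = if i = j then F i else 0)
    (spec : B = ∑ i ∈ Finset.range (D + 1), th i • F i) (j : ℕ) :
    F j * B = th j • F j ∧ B * F j = th j • F j := by
  by_cases hj : j ≤ D
  · rw [spec]
    constructor
    · rw [Finset.mul_sum, Finset.sum_eq_single j]
      · simp [idem]
      · intro b _ hb
        simp [idem, Ne.symm hb]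
      · intro h
        simp at h
        omega
    · rw [Finset.sum_mul, Finset.sum_eq_single j]
      · simp [idem]
      · intro b _ hb
        simp [idem, hb]
      · intro h
        simp at h
        omega
  · simp [zero j (by omega)]

namespace HalfTD

variable {A B : Matrix X X ℂ} {F : ℕ → Matrix X X ℂ} {th : ℕ → ℂ} {D : ℕ}
    {W : Submodule ℂ (X → ℂ)} {r d : ℕ}

lemma pow_spec (h : HalfTD A B F th D W r d) (n : ℕ) (j : ℕ) : B ^ n * F j = th j ^ n • F j := by
  induction n with
  | zero => simp
  | succ n ih =>
    rw [pow_succ, mul_assoc, (spec_mul B F th D h.zero h.idem h.spec j).2, Matrix.mul_smul, ih,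
      smul_smul]
    ring_nf

lemma aeval_spec (h : HalfTD A B F th D W r d) (p : Polynomial ℂ) (j : ℕ) :
    Polynomial.aeval B p * F j = p.eval (th j) • F j := by
  induction p using Polynomial.induction_on' with
  | add p q hp hq => simp [add_mul, hp, hq, add_smul]
  | monomial n a =>
    rw [Polynomial.aeval_monomial, mul_assoc, h.pow_spec, Polynomial.eval_monomial,
      ← Algebra.smul_def, smul_smul]

lemma aeval_mem (h : HalfTD A B F th D W r d) (p : Polynomial ℂ) (w : X → ℂ) (hw : w ∈ W) :
    Polynomial.aeval B p *ᵥ w ∈ W := by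
  have hpow : ∀ n : ℕ, B ^ n *ᵥ w ∈ W := by
    intro n
    induction n with
    | zero => simpa using hw
    | succ n ih =>
      rw [pow_succ', ← Matrix.mulVec_mulVec]
      exact h.WB _ ih
  induction p using Polynomial.induction_on' with
  | add p q hp hq =>
    rw [map_add, Matrix.add_mulVec]
    exact W.add_mem hp hq
  | monomial n a =>
    rw [Polynomial.aeval_monomial, ← Algebra.smul_def, Matrix.smul_mulVec]
    exact W.smul_mem _ (hpow n)

lemma F_mem (h : HalfTD A B F th D W r d) (j : ℕ) (w : X → ℂ) (hw : w ∈ W) : F j *ᵥ w ∈ W := by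
  by_cases hj : j ≤ D
  · have key : Polynomial.aeval B (Lagrange.basis (Finset.range (D + 1)) th j) = F j := by
      rw [← mul_one (Polynomial.aeval B _), ← h.sum, Finset.mul_sum, Finset.sum_eq_single j]
      · rw [h.aeval_spec, Lagrange.eval_basis_self, one_smul]
        · intro a ha b hb hab
          simp at ha hb
          exact h.inj a b (by omega) (by omega) hab
        · simp
          omega
      · intro b hb hbj
        rw [h.aeval_spec, Lagrange.eval_basis_of_ne (Ne.symm hbj) hb, zero_smul]
      · intro h
        simp at h
        omega
    rw [← key]
    exact h.aeval_mem _ _ hw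
  · simp [h.zero j (by omega)]

lemma decomp (h : HalfTD A B F th D W r d) (w : X → ℂ) :
    w = ∑ i ∈ Finset.range (D + 1), F i *ᵥ w := by
  rw [← Matrix.sum_mulVec, h.sum, Matrix.one_mulVec]

lemma F_supp (h : HalfTD A B F th D W r d) (j : ℕ) (hj : ¬ (r ≤ j ∧ j ≤ r + d)) (w : X → ℂ)
    (hw : w ∈ W) : F j *ᵥ w = 0 := by
  have := (not_congr (h.supp j)).2 hj
  rw [not_not] at this
  have h2 : F j *ᵥ w ∈ W.map (F j).mulVecLin := ⟨w, hw, rfl⟩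
  rw [this] at h2
  simpa using h2

lemma supp_le (h : HalfTD A B F th D W r d) (i : ℕ) (hi : i ≤ d) : r + i ≤ D := by
  by_contra hc
  apply (h.supp (r + i)).2 ⟨by omega, by omega⟩
  rw [h.zero _ (by omega)]
  simp

lemma decomp' (h : HalfTD A B F th D W r d) (w : X → ℂ) (hw : w ∈ W) :
    w = ∑ i ∈ Finset.range (d + 1), F (r + i) *ᵥ w := by
  conv_lhs => rw [h.decomp w]
  symm
  rw [← Finset.sum_image (s := Finset.range (d + 1)) (g := fun i => r + i)
    (f := fun i => F i *ᵥ w) (fun a _ b _ hab => by simpa using hab)]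
  apply Finset.sum_subset
  · intro i hi
    simp at hi
    obtain ⟨a, ha, rfl⟩ := hi
    have := h.supp_le a (by omega)
    simp
    omega
  · intro i _ hi
    apply h.F_supp _ _ w hw
    rintro ⟨h1, h2⟩
    apply hi
    simp
    exact ⟨i - r, by omega, by omega⟩

lemma thin_span (h : HalfTD A B F th D W r d) (i : ℕ) (u : X → ℂ)
    (hu : u ∈ W.map (F i).mulVecLin) (hu0 : u ≠ 0) :
    Submodule.span ℂ {u} = W.map (F i).mulVecLin := by
  apply Submodule.eq_of_le_of_finrank_le
  · rwa [Submodule.span_singleton_le_iff_mem]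
  · rw [finrank_span_singleton hu0]
    exact h.thin i

lemma step (h : HalfTD A B F th D W r d) (k : ℕ) (hrk : r ≤ k) (hk : k < r + d) (u : X → ℂ)
    (hu : u ∈ W.map (F k).mulVecLin) (hu0 : u ≠ 0) : F (k + 1) *ᵥ (A *ᵥ u) ≠ 0 := by
  intro hz
  let U : Submodule ℂ (X → ℂ) :=
    { carrier := {w | w ∈ W ∧ ∀ j, k < j → F j *ᵥ w = 0}
      add_mem' := by
        rintro a b ⟨ha, ha'⟩ ⟨hb, hb'⟩
        refine ⟨W.add_mem ha hb, fun j hj => ?_⟩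
        rw [Matrix.mulVec_add, ha' j hj, hb' j hj, add_zero]
      zero_mem' := ⟨W.zero_mem, fun j _ => by simp⟩
      smul_mem' := by
        rintro c a ⟨ha, ha'⟩
        refine ⟨W.smul_mem c ha, fun j hj => ?_⟩
        rw [Matrix.mulVec_smul, ha' j hj, smul_zero] }
  have hU : ∀ w, w ∈ U ↔ (w ∈ W ∧ ∀ j, k < j → F j *ᵥ w = 0) := fun w => Iff.rfl
  have hAU : ∀ w ∈ U, A *ᵥ w ∈ U := by
    intro w hw
    rw [hU] at hw ⊢
    refine ⟨h.WA w hw.1, fun j hj => ?_⟩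
    rw [h.decomp w, Matrix.mulVec_sum, Matrix.mulVec_sum]
    apply Finset.sum_eq_zero
    intro l _
    by_cases hl : k < l
    · rw [hw.2 l hl]; simp
    · by_cases hlk : l = k ∧ j = k + 1
      · obtain ⟨rfl, rfl⟩ := hlk
        have h2 : F l *ᵥ w ∈ W.map (F l).mulVecLin := ⟨w, hw.1, rfl⟩
        rw [← h.thin_span l u hu hu0, Submodule.mem_span_singleton] at h2
        obtain ⟨c, hc⟩ := h2
        rw [← hc, Matrix.mulVec_smul, Matrix.mulVec_smul, hz, smul_zero]
      · rw [Matrix.mulVec_mulVec, Matrix.mulVec_mulVec, h.tri j l (by omega), Matrix.zero_mulVec]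
  have hBU : ∀ w ∈ U, B *ᵥ w ∈ U := by
    intro w hw
    rw [hU] at hw ⊢
    refine ⟨h.WB w hw.1, fun j hj => ?_⟩
    rw [Matrix.mulVec_mulVec, (spec_mul B F th D h.zero h.idem h.spec j).1, Matrix.smul_mulVec,
      hw.2 j hj, smul_zero]
  have huU : u ∈ U := by
    obtain ⟨w, hw, rfl⟩ := hu
    rw [hU]
    refine ⟨h.F_mem k w hw, fun j hj => ?_⟩
    rw [Matrix.mulVecLin_apply, Matrix.mulVec_mulVec, h.idem, if_neg (by omega),
      Matrix.zero_mulVec]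
  rcases h.irr U (fun w hw => ((hU w).1 hw).1) hAU hBU with h0 | h1
  · rw [h0] at huU
    exact hu0 (by simpa using huU)
  · apply (h.supp (k + 1)).2 ⟨by omega, by omega⟩
    rw [Submodule.eq_bot_iff]
    rintro _ ⟨w, hw, rfl⟩
    have hw : w ∈ W := hw
    rw [← h1, hU] at hw
    exact hw.2 (k + 1) (by omega)

lemma pow_mem (h : HalfTD A B F th D W r d) (w : X → ℂ) (hw : w ∈ W) (n : ℕ) :
    A ^ n *ᵥ w ∈ W := by
  induction n with
  | zero => simpa using hw
  | succ n ih =>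
    rw [pow_succ', ← Matrix.mulVec_mulVec]
    exact h.WA _ ih

lemma map_mem (h : HalfTD A B F th D W r d) (v : X → ℂ) (hv : v ∈ W.map (F r).mulVecLin) :
    v ∈ W := by
  obtain ⟨w, hw, rfl⟩ := hv
  exact h.F_mem r w hw

lemma pow_supp (h : HalfTD A B F th D W r d) (v : X → ℂ) (hv : v ∈ W.map (F r).mulVecLin)
    (n : ℕ) : ∀ j, r + n < j → F j *ᵥ (A ^ n *ᵥ v) = 0 := by
  induction n with
  | zero =>
    intro j hj
    obtain ⟨w, hw, rfl⟩ := hv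
    rw [pow_zero, Matrix.one_mulVec, Matrix.mulVecLin_apply, Matrix.mulVec_mulVec, h.idem,
      if_neg (by omega), Matrix.zero_mulVec]
  | succ n ih =>
    intro j hj
    rw [pow_succ', ← Matrix.mulVec_mulVec, h.decomp (A ^ n *ᵥ v), Matrix.mulVec_sum,
      Matrix.mulVec_sum]
    apply Finset.sum_eq_zero
    intro l _
    by_cases hl : r + n < l
    · rw [ih l hl]; simp
    · generalize A ^ n *ᵥ v = z
      rw [Matrix.mulVec_mulVec, Matrix.mulVec_mulVec, h.tri j l (by omega), Matrix.zero_mulVec]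

lemma pow_step (h : HalfTD A B F th D W r d) (v : X → ℂ) (hv : v ∈ W.map (F r).mulVecLin)
    (n : ℕ) : F (r + (n + 1)) *ᵥ (A ^ (n + 1) *ᵥ v) =
      F (r + n + 1) *ᵥ (A *ᵥ (F (r + n) *ᵥ (A ^ n *ᵥ v))) := by
  rw [← add_assoc, pow_succ', ← Matrix.mulVec_mulVec]
  conv_lhs => rw [h.decomp (A ^ n *ᵥ v), Matrix.mulVec_sum, Matrix.mulVec_sum]
  apply Finset.sum_eq_single
  · intro l _ hl
    by_cases hl' : r + n < l
    · rw [h.pow_supp v hv n l hl']; simp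
    · generalize A ^ n *ᵥ v = z
      rw [Matrix.mulVec_mulVec, Matrix.mulVec_mulVec, h.tri _ l (by omega), Matrix.zero_mulVec]
  · intro hn
    rw [h.zero (r + n) (by simp at hn; omega)]
    simp

lemma ne_zero (h : HalfTD A B F th D W r d) (v : X → ℂ) (hv : v ∈ W.map (F r).mulVecLin)
    (hv0 : v ≠ 0) (i : ℕ) (hi : i ≤ d) : F (r + i) *ᵥ (A ^ i *ᵥ v) ≠ 0 := by
  induction i with
  | zero =>
    obtain ⟨w, hw, rfl⟩ := hv
    simpa [h.idem] using hv0
  | succ n ih =>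
    rw [h.pow_step v hv]
    exact h.step (r + n) (by omega) (by omega) _ ⟨_, h.pow_mem v (h.map_mem v hv) n, rfl⟩
      (ih (by omega))

lemma span_eq (h : HalfTD A B F th D W r d) (v : X → ℂ) (hv : v ∈ W.map (F r).mulVecLin)
    (hv0 : v ≠ 0) (i : ℕ) (hi : i ≤ d) :
    Submodule.span ℂ {F (r + i) *ᵥ (A ^ i *ᵥ v)} = W.map (F (r + i)).mulVecLin :=
  h.thin_span _ _ ⟨_, h.pow_mem v (h.map_mem v hv) i, rfl⟩ (h.ne_zero v hv hv0 i hi)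

lemma main (h : HalfTD A B F th D W r d) (v : X → ℂ) (hv : v ∈ W.map (F r).mulVecLin)
    (hv0 : v ≠ 0) :
    (∀ i ≤ d, F (r + i) *ᵥ (A ^ i *ᵥ v) ≠ 0 ∧
        Submodule.span ℂ {F (r + i) *ᵥ (A ^ i *ᵥ v)} = W.map (F (r + i)).mulVecLin) ∧
      LinearIndependent ℂ
        (fun i : Fin (d + 1) => F (r + i) *ᵥ (A ^ (i : ℕ) *ᵥ v)) ∧
      Submodule.span ℂ
        (Set.range fun i : Fin (d + 1) => F (r + i) *ᵥ (A ^ (i : ℕ) *ᵥ v)) = W := by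
  refine ⟨fun i hi => ⟨h.ne_zero v hv hv0 i hi, h.span_eq v hv hv0 i hi⟩, ?_, ?_⟩
  · rw [Fintype.linearIndependent_iff]
    intro g hg i
    have h1 := congrArg (fun z => F (r + i) *ᵥ z) hg
    simp only [Matrix.mulVec_sum, Matrix.mulVec_smul, Matrix.mulVec_zero] at h1
    rw [Finset.sum_eq_single i] at h1
    · rw [Matrix.mulVec_mulVec, h.idem, if_pos rfl] at h1
      exact (smul_eq_zero.1 h1).resolve_right (h.ne_zero v hv hv0 i (by omega))
    · intro b _ hb
      have : (i : ℕ) ≠ b := fun hc => hb (Fin.ext hc.symm)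
      rw [Matrix.mulVec_mulVec, h.idem, if_neg (by omega), Matrix.zero_mulVec, smul_zero]
    · simp
  · apply le_antisymm
    · rw [Submodule.span_le]
      rintro _ ⟨i, rfl⟩
      exact h.F_mem _ _ (h.pow_mem v (h.map_mem v hv) i)
    · intro w hw
      rw [h.decomp' w hw]
      apply Submodule.sum_mem
      intro i hi
      have hi' : i < d + 1 := by simpa using hi
      have h2 : F (r + i) *ᵥ w ∈ W.map (F (r + i)).mulVecLin := ⟨w, hw, rfl⟩
      rw [← h.span_eq v hv hv0 i (by omega)] at h2
      refine Submodule.span_mono ?_ h2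
      rw [Set.singleton_subset_iff]
      exact ⟨⟨i, hi'⟩, rfl⟩

/-- `W` is generated by `v` under powers of `A`. -/
lemma cyclic (h : HalfTD A B F th D W r d) (v : X → ℂ) (hv : v ∈ W.map (F r).mulVecLin)
    (hv0 : v ≠ 0) : W ≤ Submodule.span ℂ (Set.range fun n : ℕ => A ^ n *ᵥ v) := by
  have key : ∀ i, i ≤ d → W.map (F (r + i)).mulVecLin ≤
      Submodule.span ℂ (Set.range fun n : ℕ => A ^ n *ᵥ v) := by
    intro i
    induction i using Nat.strong_induction_on with
    | _ i ih =>
      intro hi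
      rw [← h.span_eq v hv hv0 i hi, Submodule.span_singleton_le_iff_mem]
      have hm := h.pow_mem v (h.map_mem v hv) i
      have h1 := h.decomp' _ hm
      rw [← Finset.add_sum_erase _ _ (show i ∈ Finset.range (d + 1) by simp; omega)] at h1
      rw [eq_sub_of_add_eq h1.symm]
      apply Submodule.sub_mem
      · exact Submodule.subset_span ⟨i, rfl⟩
      · apply Submodule.sum_mem
        intro l hl
        simp at hl
        by_cases hli : l < i
        · exact ih l hli (by omega) ⟨_, hm, rfl⟩
        · rw [h.pow_supp v hv i _ (by omega)]
          exact Submodule.zero_mem _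
  intro w hw
  rw [h.decomp' w hw]
  apply Submodule.sum_mem
  intro i hi
  exact key i (by simp at hi; omega) ⟨w, hw, rfl⟩

end HalfTD

/-- Thinness implies dual thinness. -/
lemma dual_thin {A B : Matrix X X ℂ} {F : ℕ → Matrix X X ℂ} {th : ℕ → ℂ} {D : ℕ}
    {W : Submodule ℂ (X → ℂ)} {r d : ℕ} (h : HalfTD A B F th D W r d)
    (E : Matrix X X ℂ) (c : ℂ) (hE : E * A = c • E) :
    Module.finrank ℂ (W.map E.mulVecLin) ≤ 1 := by
  obtain ⟨v, hv, hv0⟩ := Submodule.exists_mem_ne_zero_of_ne_bot ((h.supp r).2 ⟨le_rfl, by omega⟩)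
  have hle : W.map E.mulVecLin ≤ Submodule.span ℂ {E *ᵥ v} := by
    refine (Submodule.map_mono (h.cyclic v hv hv0)).trans ?_
    rw [Submodule.map_span_le]
    rintro _ ⟨n, rfl⟩
    have hp : E * A ^ n = c ^ n • E := by
      induction n with
      | zero => simp
      | succ n ih =>
        rw [pow_succ, ← mul_assoc, ih, Matrix.smul_mul, hE, smul_smul, pow_succ]
    rw [Matrix.mulVecLin_apply, Matrix.mulVec_mulVec, hp, Matrix.smul_mulVec]
    exact Submodule.smul_mem _ _ (Submodule.mem_span_singleton_self _)
  refine (Submodule.finrank_mono hle).trans ?_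
  simpa using finrank_span_le_card (R := ℂ) ({E *ᵥ v} : Set (X → ℂ))

namespace TSetup

lemma E_idem (S : TSetup X) (i j : ℕ) : S.E i * S.E j = if i = j then S.E i else 0 := by
  by_cases hi : i ≤ S.D
  · by_cases hj : j ≤ S.D
    · exact S.hEidem i j hi hj
    · rw [S.hEzero j (by omega), if_neg (by omega), mul_zero]
  · simp [S.hEzero i (by omega)]

lemma Estar_diag (S : TSetup X) (i : ℕ) :
    S.Estar i = Matrix.diagonal (fun y => if S.G.dist S.x y = i then (1 : ℂ) else 0) := by
  ext y z
  by_cases hi : i ≤ S.D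
  · rw [S.hEstar i hi, Matrix.diagonal_apply]
    by_cases hyz : y = z <;> simp [hyz]
  · rw [S.hEstarzero i (by omega), Matrix.diagonal_apply]
    have := S.hDiamLe S.x y
    have h2 : S.G.dist S.x y ≠ i := by omega
    simp [h2]

lemma Estar_idem (S : TSetup X) (i j : ℕ) :
    S.Estar i * S.Estar j = if i = j then S.Estar i else 0 := by
  rw [Estar_diag, Estar_diag, Matrix.diagonal_mul_diagonal]
  split_ifs with h
  · subst h
    congr 1
    ext y
    split_ifs <;> simp
  · rw [← Matrix.diagonal_zero]
    congr 1
    ext y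
    by_cases h1 : S.G.dist S.x y = i
    · have : S.G.dist S.x y ≠ j := by omega
      simp [this]
    · simp [h1]

lemma Estar_sum (S : TSetup X) : ∑ i ∈ Finset.range (S.D + 1), S.Estar i = 1 := by
  ext y z
  rw [Matrix.sum_apply]
  simp only [Estar_diag, Matrix.diagonal_apply, Matrix.one_apply]
  by_cases hyz : y = z
  · simp only [hyz, if_true, Finset.sum_ite_eq]
    have := S.hDiamLe S.x z
    rw [if_pos]
    simp
    omega
  · simp [hyz]

lemma Estar_tri (S : TSetup X) (i j : ℕ) (hij : i + 1 < j ∨ j + 1 < i) :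
    S.Estar i * S.A * S.Estar j = 0 := by
  ext y z
  rw [Estar_diag, Estar_diag, Matrix.mul_diagonal, Matrix.diagonal_mul, S.hA]
  by_cases h1 : S.G.dist S.x y = i
  · by_cases h2 : S.G.dist S.x z = j
    · have : ¬ S.G.Adj y z := by
        intro hadj
        have e1 := S.hGconn.dist_triangle (u := S.x) (v := y) (w := z)
        have e2 := S.hGconn.dist_triangle (u := S.x) (v := z) (w := y)
        rw [SimpleGraph.dist_eq_one_iff_adj.2 hadj] at e1
        rw [SimpleGraph.dist_eq_one_iff_adj.2 hadj.symm] at e2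
        omega
      simp [this]
    · simp [h2]
  · simp [h1]

lemma E_conj (S : TSetup X) (i : ℕ) : (S.E i)ᴴ = S.E i := by
  rw [Matrix.conjTranspose, S.hEsymm]
  exact S.hEreal i

lemma Astar_diag (S : TSetup X) :
    S.Astar = Matrix.diagonal (fun y => (Fintype.card X : ℂ) * S.E 1 S.x y) := by
  ext y z
  rw [S.hAstar, Matrix.diagonal_apply]

lemma Astar_conj (S : TSetup X) : (S.Astar)ᴴ = S.Astar := by
  rw [Astar_diag, Matrix.diagonal_conjTranspose]
  congr 1
  ext y
  have : star (S.E 1 S.x y) = S.E 1 S.x y := congrFun (congrFun (S.hEreal 1) S.x) y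
  simp only [Pi.star_apply, star_mul', this]
  simp

open scoped ComplexOrder in
lemma E_tri (S : TSetup X) (i j : ℕ) (hij : i + 1 < j ∨ j + 1 < i) :
    S.E i * S.Astar * S.E j = 0 := by
  by_cases hi : i ≤ S.D
  swap
  · simp [S.hEzero i (by omega)]
  by_cases hj : j ≤ S.D
  swap
  · simp [S.hEzero j (by omega)]
  have hD := S.hD3
  have hq : S.q 1 i j = 0 := S.hQpoly0 1 i j (by omega) hi hj (by omega)
  have hH : Matrix.hadamard (S.E i) (S.E j) * S.E 1 = 0 := by
    rw [S.hKrein i j hi hj, Matrix.smul_mul, Finset.sum_mul]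
    rw [Finset.sum_eq_zero, smul_zero]
    intro h _
    rw [Matrix.smul_mul, S.E_idem]
    by_cases h1 : h = 1
    · subst h1; simp [hq]
    · simp [h1]
  rw [← Matrix.trace_mul_conjTranspose_self_eq_zero_iff]
  rw [Matrix.conjTranspose_mul, Matrix.conjTranspose_mul, E_conj, E_conj, Astar_conj]
  have e1 : S.E i * S.Astar * S.E j * (S.E j * (S.Astar * S.E i)) =
      S.E i * (S.Astar * S.E j * S.Astar * S.E i) := by
    have := S.E_idem j j
    rw [if_pos rfl] at this
    calc _ = S.E i * S.Astar * (S.E j * S.E j) * (S.Astar * S.E i) := by noncomm_ring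
      _ = _ := by rw [this]; noncomm_ring
  rw [e1, Matrix.trace_mul_comm, mul_assoc, S.E_idem i i, if_pos rfl]
  rw [Matrix.trace]
  have e2 : ∀ y, (S.Astar * S.E j * S.Astar * S.E i).diag y =
      (Fintype.card X : ℂ) * S.E 1 S.x y * (Fintype.card X : ℂ) *
        (Matrix.hadamard (S.E i) (S.E j) * S.E 1) y S.x := by
    intro y
    rw [Matrix.diag_apply, Matrix.mul_apply, Matrix.mul_apply, Finset.mul_sum]
    apply Finset.sum_congr rfl
    intro z _
    rw [Astar_diag, Matrix.mul_diagonal, Matrix.diagonal_mul, Matrix.hadamard_apply]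
    have s1 : S.E i z y = S.E i y z := congrFun (congrFun (S.hEsymm i) y) z
    have s2 : S.E 1 z S.x = S.E 1 S.x z := congrFun (congrFun (S.hEsymm 1) S.x) z
    rw [s1, s2]
    ring
  apply Finset.sum_eq_zero
  intro y _
  rw [e2, hH]
  simp

end TSetup

/-- A subspace invariant under `A` and `A*` is `T`-invariant. -/
lemma T_inv (S : TSetup X) (U : Submodule ℂ (X → ℂ)) (hA : ∀ w ∈ U, S.A *ᵥ w ∈ U)
    (hB : ∀ w ∈ U, S.Astar *ᵥ w ∈ U) : ∀ B ∈ S.T, ∀ w ∈ U, B *ᵥ w ∈ U := by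
  intro B hBT
  refine Algebra.adjoin_induction (p := fun B _ => ∀ w ∈ U, B *ᵥ w ∈ U) ?_ ?_ ?_ ?_ hBT
  · rintro x (rfl | rfl)
    · exact hA
    · exact hB
  · intro c w hw
    rw [Algebra.algebraMap_eq_smul_one, Matrix.smul_mulVec, Matrix.one_mulVec]
    exact U.smul_mem _ hw
  · intro a b _ _ ha hb w hw
    rw [Matrix.add_mulVec]
    exact U.add_mem (ha w hw) (hb w hw)
  · intro a b _ _ ha hb w hw
    rw [← Matrix.mulVec_mulVec]
    exact ha _ (hb w hw)

lemma A_mem_T (S : TSetup X) : S.A ∈ S.T := Algebra.subset_adjoin (by simp)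

lemma Astar_mem_T (S : TSetup X) : S.Astar ∈ S.T := Algebra.subset_adjoin (by simp)

lemma half1 (S : TSetup X) (M : TMod S) :
    HalfTD S.A S.Astar S.Estar (fun i => (S.θstar i : ℂ)) S.D M.W M.r M.d where
  zero := S.hEstarzero
  sum := S.Estar_sum
  idem := S.Estar_idem
  inj := fun i j hi hj h => S.hθstarinj i j hi hj (by simpa using h)
  spec := S.hAstarspec
  tri := S.Estar_tri
  WA := M.hWinv _ (A_mem_T S)
  WB := M.hWinv _ (Astar_mem_T S)
  irr := fun U hU h1 h2 => M.hWirr U hU (T_inv S U h1 h2)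
  thin := M.hthin
  supp := M.hr

lemma half2 (S : TSetup X) (M : TMod S) :
    HalfTD S.Astar S.A S.E (fun i => (S.θ i : ℂ)) S.D M.W M.t M.d where
  zero := S.hEzero
  sum := S.hEsum
  idem := S.E_idem
  inj := fun i j hi hj h => S.hθinj i j hi hj (by simpa using h)
  spec := S.hAspec
  tri := S.E_tri
  WA := M.hWinv _ (Astar_mem_T S)
  WB := M.hWinv _ (A_mem_T S)
  irr := fun U hU h1 h2 => M.hWirr U hU (T_inv S U h2 h1)
  thin := fun i => dual_thin (half1 S M) _ _
    (spec_mul S.A S.E (fun i => (S.θ i : ℂ)) S.D S.hEzero S.E_idem S.hAspec i).1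
  supp := M.ht

/-- For nonzero `v ∈ E*_r W`, each `E*_{r+i} A^i v` is nonzero (hence spans `E*_{r+i} W`)
and `{E*_{r+i} A^i v}_{i=0}^d` is a basis of `W`; dually for nonzero `u ∈ E_t W`. -/
theorem stmt3 (S : TSetup X) (M : TMod S) (hd : 0 < M.d) :
    (∀ v ∈ M.W.map (S.Estar M.r).mulVecLin, v ≠ 0 →
      (∀ i ≤ M.d, S.Estar (M.r + i) *ᵥ (S.A ^ i *ᵥ v) ≠ 0 ∧
        Submodule.span ℂ {S.Estar (M.r + i) *ᵥ (S.A ^ i *ᵥ v)} =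
          M.W.map (S.Estar (M.r + i)).mulVecLin) ∧
      LinearIndependent ℂ
        (fun i : Fin (M.d + 1) => S.Estar (M.r + i) *ᵥ (S.A ^ (i : ℕ) *ᵥ v)) ∧
      Submodule.span ℂ
        (Set.range fun i : Fin (M.d + 1) => S.Estar (M.r + i) *ᵥ (S.A ^ (i : ℕ) *ᵥ v)) = M.W) ∧
    (∀ u ∈ M.W.map (S.E M.t).mulVecLin, u ≠ 0 →
      (∀ i ≤ M.d, S.E (M.t + i) *ᵥ (S.Astar ^ i *ᵥ u) ≠ 0 ∧
        Submodule.span ℂ {S.E (M.t + i) *ᵥ (S.Astar ^ i *ᵥ u)} =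
          M.W.map (S.E (M.t + i)).mulVecLin) ∧
      LinearIndependent ℂ
        (fun i : Fin (M.d + 1) => S.E (M.t + i) *ᵥ (S.Astar ^ (i : ℕ) *ᵥ u)) ∧
      Submodule.span ℂ
        (Set.range fun i : Fin (M.d + 1) => S.E (M.t + i) *ᵥ (S.Astar ^ (i : ℕ) *ᵥ u)) = M.W) := by
  exact ⟨(half1 S M).main, (half2 S M).main⟩
end
end

section
/- The following hold: (i) Σ_{i=0}^d a_i(W) = Σ_{i=0}^d θ_{t+i}; (ii) Σ_{i=0}^d a*_i(W) = Σ_{i=0}^d θ*_{r+i}; (iii) a_i(W) and a*_i(W) are real for 0 ≤ i ≤ d; (iv) x_i(W) is real and x_i(W) > 0 for 1 ≤ i ≤ d; (v) x*_i(W) is real and x*_i(W) > 0 for 1 ≤ i ≤ d. -/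
open Matrix
open scoped Classical

noncomputable section

variable {X : Type*} [Fintype X] [DecidableEq X]

section helpers

theorem actW_apply (S : TSetup X) (M : TMod S) {B : Matrix X X ℂ} (hB : B ∈ S.T) (w : M.W) :
    ((actW S M B w : M.W) : X → ℂ) = B *ᵥ (w : X → ℂ) := by
  have h : ∀ w ∈ M.W, B.mulVecLin w ∈ M.W := fun w hw => M.hWinv B hB w hw
  unfold actW
  rw [dif_pos h]
  rfl

theorem trW_add (S : TSetup X) (M : TMod S) {B C : Matrix X X ℂ} (hB : B ∈ S.T) (hC : C ∈ S.T) :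
    trW S M (B + C) = trW S M B + trW S M C := by
  unfold trW
  rw [← map_add]
  congr 1
  ext w : 2
  rw [actW_apply S M (add_mem hB hC)]
  simp [actW_apply S M hB, actW_apply S M hC, Matrix.add_mulVec]

theorem trW_smul (S : TSetup X) (M : TMod S) {B : Matrix X X ℂ} (hB : B ∈ S.T) (c : ℂ) :
    trW S M (c • B) = c * trW S M B := by
  unfold trW
  rw [← smul_eq_mul, ← map_smul]
  congr 1
  ext w : 2
  rw [actW_apply S M (S.T.smul_mem hB c)]
  simp [actW_apply S M hB, Matrix.smul_mulVec]

theorem trW_zero_of (S : TSetup X) (M : TMod S) {B : Matrix X X ℂ} (hB : B ∈ S.T)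
    (h : ∀ w ∈ M.W, B *ᵥ w = 0) : trW S M B = 0 := by
  unfold trW
  have : actW S M B = 0 := by
    ext w : 2
    rw [actW_apply S M hB, h _ w.2]
    simp
  rw [this, map_zero]

theorem trW_sum (S : TSetup X) (M : TMod S) (s : Finset ℕ) (F : ℕ → Matrix X X ℂ)
    (hF : ∀ i, F i ∈ S.T) :
    trW S M (∑ i ∈ s, F i) = ∑ i ∈ s, trW S M (F i) := by
  induction s using Finset.induction_on with
  | empty =>
    simp only [Finset.sum_empty]
    exact trW_zero_of S M (zero_mem _) (fun w _ => by simp)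
  | insert a s ha ih =>
    rw [Finset.sum_insert ha, Finset.sum_insert ha, trW_add S M (hF a) (sum_mem fun i _ => hF i), ih]

theorem trW_one (S : TSetup X) (M : TMod S) : trW S M 1 = (Module.finrank ℂ M.W : ℂ) := by
  unfold trW
  rw [← LinearMap.trace_one]
  congr 1
  ext w : 2
  rw [actW_apply S M (one_mem _)]
  simp

theorem trW_rank_one (S : TSetup X) (M : TMod S) {C : Matrix X X ℂ} (hC : C ∈ S.T)
    (v : X → ℂ) (hv : v ∈ M.W) (hv0 : v ≠ 0) (h : ∀ w ∈ M.W, ∃ c : ℂ, C *ᵥ w = c • v)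
    (a : ℂ) (ha : C *ᵥ v = a • v) : trW S M C = a := by
  choose! c hc using h
  have inj : ∀ a b : ℂ, a • v = b • v → a = b := fun a b h => smul_left_injective ℂ hv0 h
  let φ : M.W →ₗ[ℂ] ℂ :=
    { toFun := fun w => c w
      map_add' := by
        intro x y
        apply inj
        rw [add_smul, ← hc _ x.2, ← hc _ y.2, ← hc _ (x + y).2]
        simp [Matrix.mulVec_add]
      map_smul' := by
        intro k x
        apply inj
        simp only [RingHom.id_apply, smul_eq_mul, mul_smul]
        rw [← hc _ x.2, ← hc _ (k • x).2]
        simp [Matrix.mulVec_smul] }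
  have : actW S M C = φ.smulRight (⟨v, hv⟩ : M.W) := by
    ext w : 2
    rw [actW_apply S M hC, hc _ w.2]
    rfl
  unfold trW
  rw [this, LinearMap.trace_smulRight]
  apply inj
  rw [← ha]
  exact (hc v hv).symm

theorem proj_trace {V : Type*} [AddCommGroup V] [Module ℂ V] [FiniteDimensional ℂ V]
    {p : Submodule ℂ V} {f : V →ₗ[ℂ] V} (h : LinearMap.IsProj p f) :
    LinearMap.trace ℂ V f = (Module.finrank ℂ p : ℂ) := h.trace

theorem trW_idem (S : TSetup X) (M : TMod S) {F : Matrix X X ℂ} (hF : F ∈ S.T)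
    (hi : F * F = F) : trW S M F = (Module.finrank ℂ (M.W.map F.mulVecLin) : ℂ) := by
  have hle : M.W.map F.mulVecLin ≤ M.W := by
    rintro _ ⟨w, hw, rfl⟩
    exact M.hWinv F hF w hw
  have hp : LinearMap.IsProj (Submodule.comap M.W.subtype (M.W.map F.mulVecLin)) (actW S M F) := by
    constructor
    · intro w
      rw [Submodule.mem_comap]
      refine ⟨w, w.2, ?_⟩
      simp [actW_apply S M hF]
    · intro w hw
      rw [Submodule.mem_comap] at hw
      obtain ⟨u, hu, hu2⟩ := hw
      apply Subtype.ext
      rw [actW_apply S M hF]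
      have : (w : X → ℂ) = F *ᵥ u := by simpa using hu2.symm
      rw [this, Matrix.mulVec_mulVec, hi]
  unfold trW
  refine (proj_trace hp).trans ?_
  congr 1
  exact (Submodule.comapSubtypeEquivOfLe hle).finrank_eq

theorem sum_shift (D r d : ℕ) (hrd : r + d ≤ D) (g : ℕ → ℂ)
    (hg : ∀ j, ¬ (r ≤ j ∧ j ≤ r + d) → g j = 0) :
    ∑ i ∈ Finset.range (d + 1), g (r + i) = ∑ j ∈ Finset.range (D + 1), g j := by
  rw [← Finset.sum_subset (s₁ := Finset.Ico r (r + (d + 1))) (s₂ := Finset.range (D + 1))]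
  · rw [Finset.sum_Ico_eq_sum_range]
    simp
  · intro j hj
    simp at hj ⊢
    omega
  · intro j _ hj
    apply hg
    simp at hj
    omega

theorem pow_spec (D : ℕ) (F : ℕ → Matrix X X ℂ) (μ : ℕ → ℂ)
    (hsum : ∑ i ∈ Finset.range (D + 1), F i = 1)
    (hidem : ∀ i j, F i * F j = if i = j then F i else 0) (n : ℕ) :
    (∑ i ∈ Finset.range (D + 1), μ i • F i) ^ n = ∑ i ∈ Finset.range (D + 1), μ i ^ n • F i := by
  induction n with
  | zero => simp [hsum]
  | succ n ih =>
    rw [pow_succ, ih, Finset.sum_mul]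
    refine Finset.sum_congr rfl fun i hi => ?_
    rw [Finset.mul_sum]
    simp only [smul_mul_assoc, mul_smul_comm, hidem]
    rw [Finset.sum_eq_single i]
    · simp [smul_smul, pow_succ, mul_comm]
    · intro j _ hj
      simp [hj.symm]
    · intro h
      exact absurd hi h

theorem aeval_spec (D : ℕ) (F : ℕ → Matrix X X ℂ) (μ : ℕ → ℂ)
    (hsum : ∑ i ∈ Finset.range (D + 1), F i = 1)
    (hidem : ∀ i j, F i * F j = if i = j then F i else 0) (p : Polynomial ℂ) :
    Polynomial.aeval (∑ i ∈ Finset.range (D + 1), μ i • F i) p =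
      ∑ i ∈ Finset.range (D + 1), p.eval (μ i) • F i := by
  induction p using Polynomial.induction_on' with
  | add p q hp hq => simp [hp, hq, add_smul, Finset.sum_add_distrib]
  | monomial n a =>
    rw [Polynomial.aeval_monomial, pow_spec D F μ hsum hidem, Algebra.algebraMap_eq_smul_one,
      smul_mul_assoc, one_mul, Finset.smul_sum]
    simp [smul_smul]

theorem mem_of_spec (D : ℕ) (F : ℕ → Matrix X X ℂ) (μ : ℕ → ℂ)
    (hsum : ∑ i ∈ Finset.range (D + 1), F i = 1)
    (hidem : ∀ i j, F i * F j = if i = j then F i else 0)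
    (hzero : ∀ i, D < i → F i = 0)
    (hinj : ∀ i j, i ≤ D → j ≤ D → μ i = μ j → i = j)
    (T : Subalgebra ℂ (Matrix X X ℂ))
    (hB : ∑ i ∈ Finset.range (D + 1), μ i • F i ∈ T) (i : ℕ) : F i ∈ T := by
  by_cases hi : D < i
  · rw [hzero i hi]
    exact zero_mem _
  have hi' : i ∈ Finset.range (D + 1) := by simp; omega
  have hinj' : Set.InjOn μ (Finset.range (D + 1) : Set ℕ) := by
    intro a ha b hb h
    simp at ha hb
    exact hinj a b (by omega) (by omega) h
  have key := aeval_spec D F μ hsum hidem (Lagrange.basis (Finset.range (D + 1)) μ i)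
  rw [Finset.sum_eq_single (f := fun k => Polynomial.eval (μ k) _ • F k) i] at key
  · rw [Lagrange.eval_basis_self hinj' hi', one_smul] at key
    rw [← key]
    exact Polynomial.aeval_mem_adjoin_singleton ℂ _ |> fun h =>
      (Algebra.adjoin_le (by simpa using hB) : Algebra.adjoin ℂ _ ≤ T) h
  · intro j hj hne
    rw [Lagrange.eval_basis_of_ne hne.symm hj, zero_smul]
  · intro h
    exact absurd hi' h

theorem dot_self_real (v : X → ℂ) (hv : v ≠ 0) : ∃ n : ℝ, 0 < n ∧ star v ⬝ᵥ v = (n : ℂ) := by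
  refine ⟨∑ i, Complex.normSq (v i), ?_, ?_⟩
  · obtain ⟨i, hi⟩ := Function.ne_iff.mp hv
    apply Finset.sum_pos' (fun i _ => Complex.normSq_nonneg _)
    exact ⟨i, Finset.mem_univ _, Complex.normSq_pos.mpr hi⟩
  · simp [dotProduct, Complex.normSq_eq_conj_mul_self]

theorem dot_adj {C : Matrix X X ℂ} (hC : Cᴴ = C) (u v : X → ℂ) :
    star u ⬝ᵥ (C *ᵥ v) = star (C *ᵥ u) ⬝ᵥ v := by
  rw [Matrix.star_mulVec, hC, Matrix.dotProduct_mulVec]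

theorem dot_swap {C : Matrix X X ℂ} (hC : Cᴴ = C) (u v : X → ℂ) :
    star u ⬝ᵥ (C *ᵥ v) = star (star v ⬝ᵥ (C *ᵥ u)) := by
  rw [dot_adj hC, Matrix.star_dotProduct]

/-- Abstract data used twice, once for `(A, A*, E*)` and once for `(A*, A, E)`. -/
structure Sys (S : TSetup X) (M : TMod S) (F : ℕ → Matrix X X ℂ) (B B' : Matrix X X ℂ)
    (D r : ℕ) (μ : ℕ → ℂ) : Prop where
  hsum : ∑ i ∈ Finset.range (D + 1), F i = 1
  hidem : ∀ i j, F i * F j = if i = j then F i else 0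
  hzero : ∀ i, D < i → F i = 0
  hFT : ∀ i, F i ∈ S.T
  hBT : B ∈ S.T
  hFh : ∀ i, (F i)ᴴ = F i
  hBh : Bᴴ = B
  htri : ∀ i j, i + 1 < j ∨ j + 1 < i → F i * B * F j = 0
  hspec : B' = ∑ i ∈ Finset.range (D + 1), μ i • F i
  hgen : S.T = Algebra.adjoin ℂ {B, B'}
  hr : ∀ i : ℕ, M.W.map (F i).mulVecLin ≠ ⊥ ↔ r ≤ i ∧ i ≤ r + M.d

namespace Sys

variable {S : TSetup X} {M : TMod S} {F : ℕ → Matrix X X ℂ} {B B' : Matrix X X ℂ}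
    {D r : ℕ} {μ : ℕ → ℂ}

theorem le (h : Sys S M F B B' D r μ) : r + M.d ≤ D := by
  by_contra hc
  have h1 := (h.hr (r + M.d)).2 ⟨by omega, le_refl _⟩
  apply h1
  rw [h.hzero _ (by omega), Submodule.eq_bot_iff]
  rintro _ ⟨w, _, rfl⟩
  simp

theorem vanish (h : Sys S M F B B' D r μ) {j : ℕ} (hj : ¬ (r ≤ j ∧ j ≤ r + M.d))
    {w : X → ℂ} (hw : w ∈ M.W) : F j *ᵥ w = 0 := by
  have h1 : M.W.map (F j).mulVecLin = ⊥ := by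
    by_contra hc
    exact hj ((h.hr j).1 hc)
  have : (F j).mulVecLin w ∈ M.W.map (F j).mulVecLin := ⟨w, hw, rfl⟩
  rw [h1] at this
  simpa using this

theorem sum_fin (h : Sys S M F B B' D r μ) :
    ∑ i ∈ Finset.range (M.d + 1), Module.finrank ℂ (M.W.map (F (r + i)).mulVecLin) =
      Module.finrank ℂ M.W := by
  have h1 : ∑ i ∈ Finset.range (M.d + 1), trW S M (F (r + i)) = trW S M 1 := by
    rw [← h.hsum, trW_sum S M _ _ h.hFT]
    exact sum_shift D r M.d h.le (fun j => trW S M (F j))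
      (fun j hj => trW_zero_of S M (h.hFT j) fun w hw => h.vanish hj hw)
  rw [trW_one] at h1
  have h2 : ∀ i, trW S M (F i) = (Module.finrank ℂ (M.W.map (F i).mulVecLin) : ℂ) :=
    fun i => trW_idem S M (h.hFT i) (by simp [h.hidem])
  simp only [h2] at h1
  exact_mod_cast h1

theorem fin_pos (h : Sys S M F B B' D r μ) {i : ℕ} (hi : i ≤ M.d) :
    1 ≤ Module.finrank ℂ (M.W.map (F (r + i)).mulVecLin) := by
  rw [Submodule.one_le_finrank_iff]
  exact (h.hr _).2 ⟨by omega, by omega⟩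

theorem sum_a (h : Sys S M F B B' D r μ) :
    ∑ i ∈ Finset.range (M.d + 1), trW S M (F (r + i) * B) = trW S M B := by
  have : B = ∑ j ∈ Finset.range (D + 1), F j * B := by
    rw [← Finset.sum_mul, h.hsum, one_mul]
  conv_rhs => rw [this]
  rw [trW_sum S M _ _ (fun j => mul_mem (h.hFT j) h.hBT)]
  refine sum_shift D r M.d h.le (fun j => trW S M (F j * B)) (fun j hj => ?_)
  refine trW_zero_of S M (mul_mem (h.hFT j) h.hBT) fun w hw => ?_
  rw [← Matrix.mulVec_mulVec]
  exact h.vanish hj (M.hWinv B h.hBT w hw)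

theorem tr_B' (h : Sys S M F B B' D r μ)
    (h1 : ∀ i ≤ M.d, Module.finrank ℂ (M.W.map (F (r + i)).mulVecLin) = 1) :
    trW S M B' = ∑ i ∈ Finset.range (M.d + 1), μ (r + i) := by
  rw [h.hspec, trW_sum S M _ _ (fun j => S.T.smul_mem (h.hFT j) _)]
  rw [← sum_shift D r M.d h.le]
  · refine Finset.sum_congr rfl fun i hi => ?_
    rw [trW_smul S M (h.hFT _), trW_idem S M (h.hFT _) (by simp [h.hidem]), h1 i]
    · simp
    · simp at hi; omega
  · intro j hj
    rw [trW_smul S M (h.hFT _), trW_zero_of S M (h.hFT j) fun w hw => h.vanish hj hw, mul_zero]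

theorem exists_vec (h : Sys S M F B B' D r μ)
    (h1 : ∀ i ≤ M.d, Module.finrank ℂ (M.W.map (F (r + i)).mulVecLin) = 1)
    {i : ℕ} (hi : i ≤ M.d) :
    ∃ v ∈ M.W, v ≠ 0 ∧ F (r + i) *ᵥ v = v ∧ ∀ w ∈ M.W, ∃ c : ℂ, F (r + i) *ᵥ w = c • v := by
  obtain ⟨⟨v, hv⟩, hv0, hv1⟩ := finrank_eq_one_iff'.mp (h1 i hi)
  obtain ⟨u, hu, hu2⟩ := hv
  have hvu : v = F (r + i) *ᵥ u := by simpa using hu2.symm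
  refine ⟨v, ?_, ?_, ?_, ?_⟩
  · rw [hvu]
    exact M.hWinv _ (h.hFT _) u hu
  · intro h0
    apply hv0
    ext1
    exact h0
  · rw [hvu, Matrix.mulVec_mulVec, h.hidem]
    simp
  · intro w hw
    obtain ⟨c, hc⟩ := hv1 ⟨(F (r + i)).mulVecLin w, ⟨w, hw, rfl⟩⟩
    refine ⟨c, ?_⟩
    have := congrArg Subtype.val hc
    simpa using this.symm

theorem a_real (h : Sys S M F B B' D r μ)
    (h1 : ∀ i ≤ M.d, Module.finrank ℂ (M.W.map (F (r + i)).mulVecLin) = 1)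
    {i : ℕ} (hi : i ≤ M.d) : (trW S M (F (r + i) * B)).im = 0 := by
  obtain ⟨v, hv, hv0, hFv, hw⟩ := h.exists_vec h1 hi
  obtain ⟨a, ha⟩ := hw _ (M.hWinv B h.hBT v hv)
  have htr : trW S M (F (r + i) * B) = a := by
    refine trW_rank_one S M (mul_mem (h.hFT _) h.hBT) v hv hv0 ?_ a ?_
    · intro w hw'
      rw [← Matrix.mulVec_mulVec]
      exact hw _ (M.hWinv B h.hBT w hw')
    · rw [← Matrix.mulVec_mulVec, ha]
  rw [htr]
  obtain ⟨n, hn, hn'⟩ := dot_self_real v hv0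
  have e1 : star v ⬝ᵥ (B *ᵥ v) = a * n := by
    rw [← hn', ← smul_eq_mul, ← dotProduct_smul, ← ha, dot_adj (h.hFh _), hFv]
  have e2 := dot_swap h.hBh v v
  rw [e1] at e2
  have e3 := congrArg Complex.im e2
  simp at e3
  have : a.im * n = 0 := by linarith
  rcases mul_eq_zero.mp this with h | h
  · exact h
  · exact absurd h hn.ne'

theorem no_split (h : Sys S M F B B' D r μ) {i : ℕ} (hi : i + 1 ≤ M.d)
    (hz : ∀ w ∈ M.W, F (r + (i + 1)) *ᵥ (B *ᵥ (F (r + i) *ᵥ w)) = 0) : False := by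
  let U : Submodule ℂ (X → ℂ) :=
    { carrier := {w | w ∈ M.W ∧ ∀ j, r + i < j → F j *ᵥ w = 0}
      add_mem' := by
        rintro a b ⟨ha, ha'⟩ ⟨hb, hb'⟩
        refine ⟨add_mem ha hb, fun j hj => ?_⟩
        rw [Matrix.mulVec_add, ha' j hj, hb' j hj, add_zero]
      zero_mem' := ⟨zero_mem _, fun j _ => by simp⟩
      smul_mem' := by
        rintro c a ⟨ha, ha'⟩
        refine ⟨M.W.smul_mem c ha, fun j hj => ?_⟩
        rw [Matrix.mulVec_smul, ha' j hj, smul_zero] }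
  have hB'T : B' ∈ S.T := by
    rw [h.hgen]
    exact Algebra.subset_adjoin (by simp)
  have hUB : ∀ w ∈ U, B *ᵥ w ∈ U := by
    rintro w ⟨hw, hw'⟩
    refine ⟨M.hWinv B h.hBT w hw, fun j hj => ?_⟩
    have e : w = ∑ k ∈ Finset.range (D + 1), F k *ᵥ w := by
      rw [← Matrix.sum_mulVec, h.hsum, Matrix.one_mulVec]
    rw [e, Matrix.mulVec_sum, Matrix.mulVec_sum]
    refine Finset.sum_eq_zero fun k _ => ?_
    by_cases hk : r + i < k
    · rw [hw' k hk]
      simp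
    · by_cases hk2 : k + 1 < j
      · rw [Matrix.mulVec_mulVec, Matrix.mulVec_mulVec, h.htri j k (Or.inr hk2), Matrix.zero_mulVec]
      · have hk3 : k = r + i := by omega
        have hj3 : j = r + (i + 1) := by omega
        rw [hk3, hj3]
        exact hz w hw
  have hUB' : ∀ w ∈ U, B' *ᵥ w ∈ U := by
    rintro w ⟨hw, hw'⟩
    refine ⟨M.hWinv B' hB'T w hw, fun j hj => ?_⟩
    rw [h.hspec, Matrix.sum_mulVec, Matrix.mulVec_sum]
    refine Finset.sum_eq_zero fun k _ => ?_
    rw [Matrix.smul_mulVec, Matrix.mulVec_smul, Matrix.mulVec_mulVec, h.hidem]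
    split_ifs with hjk
    · rw [hw' j hj, smul_zero]
    · simp
  have hUT : ∀ C ∈ S.T, ∀ w ∈ U, C *ᵥ w ∈ U := by
    intro C hC
    rw [h.hgen] at hC
    induction hC using Algebra.adjoin_induction with
    | mem C hC =>
      rcases hC with rfl | hC
      · exact hUB
      · rw [Set.mem_singleton_iff] at hC
        rw [hC]
        exact hUB'
    | algebraMap c =>
      intro w hw
      rw [Algebra.algebraMap_eq_smul_one, Matrix.smul_mulVec, Matrix.one_mulVec]
      exact U.smul_mem c hw
    | add C C' _ _ h1 h2 =>
      intro w hw
      rw [Matrix.add_mulVec]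
      exact add_mem (h1 w hw) (h2 w hw)
    | mul C C' _ _ h1 h2 =>
      intro w hw
      rw [← Matrix.mulVec_mulVec]
      exact h1 _ (h2 w hw)
  rcases M.hWirr U (fun w hw => hw.1) hUT with hU | hU
  · apply (h.hr r).2 ⟨le_refl _, by omega⟩
    rw [Submodule.eq_bot_iff]
    rintro _ ⟨w, hw, rfl⟩
    have : (F r).mulVecLin w ∈ U := by
      refine ⟨M.hWinv _ (h.hFT r) w hw, fun j hj => ?_⟩
      rw [Matrix.mulVecLin_apply, Matrix.mulVec_mulVec, h.hidem, if_neg (by omega),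
        Matrix.zero_mulVec]
    rw [hU] at this
    simpa using this
  · apply (h.hr (r + (i + 1))).2 ⟨by omega, by omega⟩
    rw [Submodule.eq_bot_iff]
    rintro _ ⟨w, hw, rfl⟩
    have hw2 : w ∈ U := by
      rw [hU]
      exact hw
    exact hw2.2 _ (by omega)

theorem x_pos (h : Sys S M F B B' D r μ)
    (h1 : ∀ i ≤ M.d, Module.finrank ℂ (M.W.map (F (r + i)).mulVecLin) = 1)
    {i : ℕ} (hi : i + 1 ≤ M.d) :
    (trW S M (F (r + (i + 1)) * B * F (r + i) * B)).im = 0 ∧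
      0 < (trW S M (F (r + (i + 1)) * B * F (r + i) * B)).re := by
  obtain ⟨v, hv, hv0, hFv, hw⟩ := h.exists_vec h1 hi
  obtain ⟨u, hu, hu0, hFu, hw'⟩ := h.exists_vec h1 (i := i) (by omega)
  obtain ⟨b, hb⟩ := hw _ (M.hWinv B h.hBT u hu)
  obtain ⟨c, hc⟩ := hw' _ (M.hWinv B h.hBT v hv)
  have htr : trW S M (F (r + (i + 1)) * B * F (r + i) * B) = c * b := by
    refine trW_rank_one S M
      (mul_mem (mul_mem (mul_mem (h.hFT _) h.hBT) (h.hFT _)) h.hBT) v hv hv0 ?_ _ ?_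
    · intro w hww
      simp only [← Matrix.mulVec_mulVec]
      exact hw _ (M.hWinv B h.hBT _ (M.hWinv _ (h.hFT _) _ (M.hWinv B h.hBT w hww)))
    · simp only [← Matrix.mulVec_mulVec]
      rw [hc, Matrix.mulVec_smul, Matrix.mulVec_smul, hb, smul_smul]
  rw [htr]
  obtain ⟨n, hn, hn'⟩ := dot_self_real v hv0
  obtain ⟨m, hm, hm'⟩ := dot_self_real u hu0
  have e1 : star v ⬝ᵥ (B *ᵥ u) = b * n := by
    rw [← hn', ← smul_eq_mul, ← dotProduct_smul, ← hb, dot_adj (h.hFh _), hFv]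
  have e2 : star u ⬝ᵥ (B *ᵥ v) = c * m := by
    rw [← hm', ← smul_eq_mul, ← dotProduct_smul, ← hc, dot_adj (h.hFh _), hFu]
  have e3 := dot_swap h.hBh u v
  rw [e1, e2] at e3
  have hb0 : b ≠ 0 := by
    intro hb0
    apply h.no_split hi
    intro w hww
    obtain ⟨k, hk⟩ := hw' w hww
    rw [hk, Matrix.mulVec_smul, Matrix.mulVec_smul, hb, hb0]
    simp
  have e4 : c * b = ((n / m * Complex.normSq b : ℝ) : ℂ) := by
    have hmC : (m : ℂ) ≠ 0 := by exact_mod_cast hm.ne'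
    have e5 : c = star b * n / m := by
      rw [eq_div_iff hmC, e3]
      simp
    rw [e5]
    push_cast
    rw [Complex.normSq_eq_conj_mul_self]
    simp only [RCLike.star_def]
    ring
  rw [e4, Complex.ofReal_im, Complex.ofReal_re]
  exact ⟨rfl, mul_pos (div_pos hn hm) (Complex.normSq_pos.mpr hb0)⟩

end Sys

theorem estar_sum (S : TSetup X) : ∑ i ∈ Finset.range (S.D + 1), S.Estar i = 1 := by
  ext y z
  rw [Matrix.sum_apply, Finset.sum_eq_single (S.G.dist S.x y)]
  · rw [S.hEstar _ (S.hDiamLe _ _), Matrix.one_apply]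
    simp
  · intro j hj hne
    rw [S.hEstar j (by simp at hj; omega), if_neg]
    rintro ⟨_, h⟩
    exact hne h.symm
  · intro hn
    exact absurd (Finset.mem_range.mpr (Nat.lt_succ_of_le (S.hDiamLe _ _))) hn

theorem estar_diag (S : TSetup X) (i : ℕ) :
    S.Estar i = Matrix.diagonal (fun y => if S.G.dist S.x y = i then (1 : ℂ) else 0) := by
  by_cases hi : i ≤ S.D
  · ext y z
    rw [S.hEstar i hi, Matrix.diagonal_apply]
    by_cases h : y = z <;> simp [h]
  · rw [S.hEstarzero i (by omega)]
    ext y z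
    rw [Matrix.diagonal_apply]
    have := S.hDiamLe S.x y
    have hne : S.G.dist S.x y ≠ i := by omega
    simp [hne]

theorem estar_idem (S : TSetup X) (i j : ℕ) :
    S.Estar i * S.Estar j = if i = j then S.Estar i else 0 := by
  rw [estar_diag, estar_diag, Matrix.diagonal_mul_diagonal]
  split_ifs with h
  · subst h
    congr 1
    ext y
    split_ifs <;> simp
  · rw [← Matrix.diagonal_zero]
    congr 1
    ext y
    split_ifs
    · omega
    all_goals simp

theorem e_idem (S : TSetup X) (i j : ℕ) :
    S.E i * S.E j = if i = j then S.E i else 0 := by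
  by_cases hi : i ≤ S.D
  · by_cases hj : j ≤ S.D
    · exact S.hEidem i j hi hj
    · rw [S.hEzero j (by omega), if_neg (by omega), mul_zero]
  · rw [S.hEzero i (by omega), zero_mul]
    simp

theorem estar_herm (S : TSetup X) (i : ℕ) : (S.Estar i)ᴴ = S.Estar i := by
  rw [estar_diag, Matrix.diagonal_conjTranspose]
  congr 1
  ext y
  simp only [Pi.star_apply]
  split_ifs <;> simp

theorem e_herm (S : TSetup X) (i : ℕ) : (S.E i)ᴴ = S.E i := by
  have h1 := S.hEreal i
  have h2 := S.hEsymm i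
  calc (S.E i)ᴴ = ((S.E i)ᵀ).map (starRingEnd ℂ) := rfl
    _ = S.E i := by rw [h2, h1]

theorem a_herm (S : TSetup X) : S.Aᴴ = S.A := by
  ext y z
  rw [Matrix.conjTranspose_apply, S.hA, S.hA, S.G.adj_comm]
  split_ifs <;> simp

theorem astar_herm (S : TSetup X) : S.Astarᴴ = S.Astar := by
  rw [S.hAstarspec, Matrix.conjTranspose_sum]
  refine Finset.sum_congr rfl fun i _ => ?_
  rw [Matrix.conjTranspose_smul, estar_herm]
  simp

theorem a_tri (S : TSetup X) (i j : ℕ) (h : i + 1 < j ∨ j + 1 < i) :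
    S.Estar i * S.A * S.Estar j = 0 := by
  rw [estar_diag, estar_diag]
  ext y z
  rw [Matrix.mul_diagonal, Matrix.diagonal_mul, S.hA]
  split_ifs with h1 h2 h3
  · exfalso
    have d1 := S.hGconn.dist_triangle (u := S.x) (v := y) (w := z)
    have d2 := S.hGconn.dist_triangle (u := S.x) (v := z) (w := y)
    have d3 := SimpleGraph.dist_eq_one_iff_adj.mpr h2
    have d4 := SimpleGraph.dist_eq_one_iff_adj.mpr h2.symm
    omega
  all_goals simp

theorem astar_diag (S : TSetup X) :
    S.Astar = Matrix.diagonal (fun y => (Fintype.card X : ℂ) * S.E 1 S.x y) := by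
  ext y z
  rw [S.hAstar, Matrix.diagonal_apply]

open scoped ComplexOrder in
theorem astar_tri (S : TSetup X) (i j : ℕ) (h : i + 1 < j ∨ j + 1 < i) :
    S.E i * S.Astar * S.E j = 0 := by
  by_cases hi : i ≤ S.D
  swap
  · rw [S.hEzero i (by omega)]
    simp
  by_cases hj : j ≤ S.D
  swap
  · rw [S.hEzero j (by omega)]
    simp
  have hD := S.hD3
  have hq : S.q 1 i j = 0 := S.hQpoly0 1 i j (by omega) hi hj (by omega)
  have hsym : ∀ k y z, S.E k y z = S.E k z y := by
    intro k y z
    conv_lhs => rw [← S.hEsymm k]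
    rfl
  have hK : S.E 1 * Matrix.hadamard (S.E i) (S.E j) * S.E 1 = 0 := by
    rw [S.hKrein i j hi hj, mul_smul_comm, smul_mul_assoc, Finset.mul_sum, Finset.sum_mul]
    rw [Finset.sum_eq_zero, smul_zero]
    intro k hk
    rw [mul_smul_comm, smul_mul_assoc, e_idem]
    split_ifs with hk1
    · rw [← hk1, hq]
      simp
    · simp
  rw [← Matrix.trace_mul_conjTranspose_self_eq_zero_iff]
  simp only [Matrix.conjTranspose_mul, e_herm, astar_herm]
  have e1 : S.E i * S.Astar * S.E j * (S.E j * (S.Astar * S.E i)) =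
      S.E i * (S.Astar * S.E j * S.Astar * S.E i) := by
    have : S.E j * S.E j = S.E j := by simp [e_idem]
    calc _ = S.E i * S.Astar * (S.E j * S.E j) * S.Astar * S.E i := by noncomm_ring
      _ = _ := by rw [this]; noncomm_ring
  have e2 : S.E i * S.E i = S.E i := by simp [e_idem]
  rw [e1, Matrix.trace_mul_comm, mul_assoc, e2]
  have hx := congrFun (congrFun hK S.x) S.x
  rw [Matrix.mul_apply] at hx
  simp only [Matrix.mul_apply, Finset.sum_mul, Matrix.hadamard_apply, Matrix.zero_apply] at hx
  rw [Matrix.trace, astar_diag]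
  simp only [Matrix.diag_apply]
  calc _ = (Fintype.card X : ℂ) ^ 2 * ∑ z, ∑ y,
        S.E 1 S.x y * (S.E i y z * S.E j y z) * S.E 1 z S.x := by
        rw [Finset.sum_comm, Finset.mul_sum]
        refine Finset.sum_congr rfl fun y _ => ?_
        rw [Matrix.mul_apply, Finset.mul_sum]
        refine Finset.sum_congr rfl fun z _ => ?_
        rw [Matrix.mul_diagonal, Matrix.diagonal_mul, hsym 1 z S.x, hsym i z y]
        ring
    _ = 0 := by rw [hx, mul_zero]

theorem sysA (S : TSetup X) (M : TMod S) :
    Sys S M S.Estar S.A S.Astar S.D M.r (fun i => (S.θstar i : ℂ)) where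
  hsum := estar_sum S
  hidem := estar_idem S
  hzero := S.hEstarzero
  hFT := mem_of_spec S.D S.Estar (fun i => (S.θstar i : ℂ)) (estar_sum S) (estar_idem S)
    S.hEstarzero (fun i j hi hj h => S.hθstarinj i j hi hj (by exact_mod_cast h)) S.T (by
      rw [← S.hAstarspec]
      exact Algebra.subset_adjoin (by simp))
  hBT := Algebra.subset_adjoin (by simp)
  hFh := estar_herm S
  hBh := a_herm S
  htri := a_tri S
  hspec := S.hAstarspec
  hgen := rfl
  hr := M.hr

theorem sysAstar (S : TSetup X) (M : TMod S) :
    Sys S M S.E S.Astar S.A S.D M.t (fun i => (S.θ i : ℂ)) where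
  hsum := S.hEsum
  hidem := e_idem S
  hzero := S.hEzero
  hFT := mem_of_spec S.D S.E (fun i => (S.θ i : ℂ)) S.hEsum (e_idem S)
    S.hEzero (fun i j hi hj h => S.hθinj i j hi hj (by exact_mod_cast h)) S.T (by
      rw [← S.hAspec]
      exact Algebra.subset_adjoin (by simp))
  hBT := Algebra.subset_adjoin (by simp)
  hFh := e_herm S
  hBh := astar_herm S
  htri := astar_tri S
  hspec := S.hAspec
  hgen := by rw [TSetup.T, Set.pair_comm]
  hr := M.ht

theorem thinA (S : TSetup X) (M : TMod S) :
    ∀ i ≤ M.d, Module.finrank ℂ (M.W.map (S.Estar (M.r + i)).mulVecLin) = 1 :=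
  fun _ hi => le_antisymm (M.hthin _) ((sysA S M).fin_pos hi)

theorem thinAstar (S : TSetup X) (M : TMod S) :
    ∀ i ≤ M.d, Module.finrank ℂ (M.W.map (S.E (M.t + i)).mulVecLin) = 1 := by
  have h1 := (sysA S M).sum_fin
  have h2 := (sysAstar S M).sum_fin
  rw [← h1] at h2
  have h3 : ∑ i ∈ Finset.range (M.d + 1),
      Module.finrank ℂ (M.W.map (S.Estar (M.r + i)).mulVecLin) =
      ∑ i ∈ Finset.range (M.d + 1), 1 :=
    Finset.sum_congr rfl fun i hi => thinA S M i (by simp at hi; omega)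
  rw [h3] at h2
  have h4 := (Finset.sum_eq_sum_iff_of_le (fun i hi => (sysAstar S M).fin_pos
    (i := i) (by simp at hi; omega))).1 h2.symm
  intro i hi
  exact (h4 i (by simp; omega)).symm

end helpers

/-- (i) `Σ a_i(W) = Σ θ_{t+i}`; (ii) `Σ a*_i(W) = Σ θ*_{r+i}`; (iii) the `a_i(W), a*_i(W)`
are real; (iv) the `x_i(W)` are real and positive; (v) the `x*_i(W)` are real and positive. -/
theorem stmt5 (S : TSetup X) (M : TMod S) (hd : 0 < M.d) :
    (∑ i ∈ Finset.range (M.d + 1), aW S M i =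
      ∑ i ∈ Finset.range (M.d + 1), (S.θ (M.t + i) : ℂ)) ∧
    (∑ i ∈ Finset.range (M.d + 1), astarW S M i =
      ∑ i ∈ Finset.range (M.d + 1), (S.θstar (M.r + i) : ℂ)) ∧
    (∀ i ≤ M.d, (aW S M i).im = 0 ∧ (astarW S M i).im = 0) ∧
    (∀ i : ℕ, 1 ≤ i → i ≤ M.d → (xW S M i).im = 0 ∧ 0 < (xW S M i).re) ∧
    (∀ i : ℕ, 1 ≤ i → i ≤ M.d → (xstarW S M i).im = 0 ∧ 0 < (xstarW S M i).re) := by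
  have hA := sysA S M
  have hB := sysAstar S M
  have tA := thinA S M
  have tB := thinAstar S M
  refine ⟨?_, ?_, ?_, ?_, ?_⟩
  · exact hA.sum_a.trans (hB.tr_B' tB)
  · exact hB.sum_a.trans (hA.tr_B' tA)
  · exact fun i hi => ⟨hA.a_real tA hi, hB.a_real tB hi⟩
  · intro i h1 hi
    obtain ⟨k, rfl⟩ : ∃ k, i = k + 1 := ⟨i - 1, by omega⟩
    have := hA.x_pos tA hi
    unfold xW
    rw [if_neg (by omega)]
    exact this
  · intro i h1 hi
    obtain ⟨k, rfl⟩ : ∃ k, i = k + 1 := ⟨i - 1, by omega⟩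
    have := hB.x_pos tB hi
    unfold xstarW
    rw [if_neg (by omega)]
    exact this
end
end
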